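/- arXiv:2411.17613 — 5 statements merged into one kernel-verified Lean document; each statement's English description precedes it below -/
import Mathlib

section
/- For n ≥ 2 let μ_n be the uniform probability measure on the (finite, nonempty) set of labeled trees on [n], let ℓ(T) be the number of leaves of T, and let E_n and V_n be the mean and variance of ℓ under μ_n. Then the law of the normalized random variable T ↦ (ℓ(T) − E_n)/√V_n under μ_n converges weakly (in distribution), as n → ∞, to the standard Gaussian measure N(0,1) on ℝ. -/
/-!
The trees on `n ≥ 3` vertices having all of a given set of `k` vertices among their leaves arise
from the trees on the other `n - k` vertices by attaching the `k` leaves arbitrarily. Summing over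
all sets computes the factorial moments of the number of leaves in terms of the number of trees;
since every tree has a leaf, inclusion-exclusion turns this into a recursion that yields Cayley's
formula, so that `∑_T C(ℓ(T), k) = C(n, k) (n - k) ^ (n - 2)`.

Hence `∑_T (1 + x) ^ ℓ(T)` is the reverse of `(x d/dx) ^ (n - 2)` applied to `(1 + x) ^ n`, and all
of its roots are real by Rolle's theorem. A probability generating function with only real roots
factors into `(1 - p) + p x` with `p ∈ [0, 1]`, so the number of leaves is distributed as a sum of
independent Bernoulli variables (Harper's method). Such sums are asymptotically normal as soon as
their variance tends to infinity, and here it is at least `n (e⁻¹ - 2 e⁻² + o(1))`.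
-/

open MeasureTheory

/-- The number of leaves (vertices of degree 1) of a graph on `Fin n`. -/
noncomputable def leafCount {n : ℕ} (T : SimpleGraph (Fin n)) : ℕ :=
  Nat.card {v : Fin n // Nat.card (T.neighborSet v) = 1}

instance {n : ℕ} : MeasurableSpace {T : SimpleGraph (Fin n) // T.IsTree} := ⊤

/-- The uniform probability measure on the (finite, nonempty for `n ≥ 2`) set of
labeled trees on `[n]`. -/
noncomputable def treeUniform (n : ℕ) :
    Measure {T : SimpleGraph (Fin n) // T.IsTree} :=
  ((Nat.card {T : SimpleGraph (Fin n) // T.IsTree} : ENNReal))⁻¹ • Measure.count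

/-- The mean of the number of leaves under the uniform measure. -/
noncomputable def En (n : ℕ) : ℝ :=
  ∫ T, (leafCount T.val : ℝ) ∂(treeUniform n)

/-- The variance of the number of leaves under the uniform measure. -/
noncomputable def Vn (n : ℕ) : ℝ :=
  ∫ T, ((leafCount T.val : ℝ) - En n) ^ 2 ∂(treeUniform n)

namespace LeavesCLT

open Complex Filter Polynomial ProbabilityTheory Topology

/-! ### Real-rooted polynomials -/

lemma splits_derivative {p : ℝ[X]} (hp : p.Splits) : (derivative p).Splits := by
  rcases Nat.eq_zero_or_pos p.natDegree with h0 | hpos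
  · rw [eq_C_of_natDegree_eq_zero h0, derivative_C]
    exact Splits.zero
  · refine splits_iff_card_roots.2 ((card_roots' _).antisymm ?_)
    have hroots := card_roots_le_derivative p
    have hdegree := natDegree_derivative_lt hpos.ne'
    rw [← hp.natDegree_eq_card_roots] at hroots
    omega

lemma splits_reverse {K : Type*} [Field K] {p : K[X]} (hp : p.Splits) : p.reverse.Splits := by
  induction hp using Submonoid.closure_induction with
  | mem q hq =>
    rcases hq with ⟨a, rfl⟩ | ⟨a, rfl⟩
    · rw [reverse_C]
      exact Splits.C a
    · refine Splits.of_natDegree_le_one ((reverse_natDegree_le _).trans ?_)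
      rw [natDegree_X_add_C]
  | one => rw [← C_1, reverse_C, C_1]; exact Splits.one
  | mul p q _ _ hp hq => rw [reverse_mul_of_domain]; exact hp.mul hq

lemma splits_of_splits_taylor {R : Type*} [CommRing R] {p : R[X]} {r : R}
    (hp : (taylor r p).Splits) : p.Splits := by
  simpa only [taylor_taylor, neg_add_cancel, taylor_zero] using hp.taylor (-r)

/-- The Euler operator `X d/dX`, which multiplies the coefficient of `X ^ k` by `k`. -/
noncomputable def eulerOperator {R : Type*} [CommSemiring R] (p : R[X]) : R[X] := X * derivative p

lemma coeff_eulerOperator {R : Type*} [CommSemiring R] (p : R[X]) (k : ℕ) :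
    (eulerOperator p).coeff k = k * p.coeff k := by
  rcases k with - | k
  · rw [eulerOperator, coeff_X_mul_zero, Nat.cast_zero, zero_mul]
  · rw [eulerOperator, coeff_X_mul, coeff_derivative, Nat.cast_succ, mul_comm]

lemma coeff_eulerOperator_iterate {R : Type*} [CommSemiring R] (m : ℕ) (p : R[X]) (k : ℕ) :
    (eulerOperator^[m] p).coeff k = k ^ m * p.coeff k := by
  induction m with
  | zero => rw [Function.iterate_zero_apply, pow_zero, one_mul]
  | succ m ih => rw [Function.iterate_succ_apply', coeff_eulerOperator, ih, pow_succ', mul_assoc]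

lemma splits_eulerOperator_iterate (m : ℕ) {p : ℝ[X]} (hp : p.Splits) :
    (eulerOperator^[m] p).Splits := by
  induction m generalizing p with
  | zero => exact hp
  | succ _ ih => exact ih (Splits.X.mul (splits_derivative hp))

lemma nonpos_of_isRoot {R : Type*} [Ring R] [LinearOrder R] [IsStrictOrderedRing R] {p : R[X]}
    (hp0 : p ≠ 0) (hp : ∀ k, 0 ≤ p.coeff k) {r : R} (hr : p.IsRoot r) : r ≤ 0 := by
  by_contra! hpos
  refine (Finset.sum_pos' (s := p.support) (f := fun k => p.coeff k * r ^ k)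
    (fun k _ => mul_nonneg (hp k) (pow_nonneg hpos.le k)) ?_).ne' ?_
  · obtain ⟨k, hk⟩ := nonempty_support_iff.2 hp0
    exact ⟨k, hk, mul_pos ((hp k).lt_of_ne' (mem_support_iff.1 hk)) (pow_pos hpos k)⟩
  · rw [← hr, eval_eq_sum, Polynomial.sum]

/-- The generating function of a sum of independent Bernoulli variables whose success probabilities
are the elements of `s`. -/
noncomputable def bernoulliProd (s : Multiset ℝ) : ℝ[X] :=
  (s.map fun p => C (1 - p) + C p * X).prod

lemma exists_eq_bernoulliProd {P : ℝ[X]} (hP : P.Splits) (hcoeff : ∀ k, 0 ≤ P.coeff k)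
    (hone : P.eval 1 = 1) :
    ∃ s : Multiset ℝ, (∀ p ∈ s, p ∈ Set.Icc (0 : ℝ) 1) ∧ P = bernoulliProd s := by
  have hP0 : P ≠ 0 := by rintro rfl; simp at hone
  have hroot : ∀ r ∈ P.roots, r ≤ 0 := fun r hr =>
    nonpos_of_isRoot hP0 hcoeff (isRoot_of_mem_roots hr)
  refine ⟨P.roots.map fun r => (1 - r)⁻¹, ?_, ?_⟩
  · simp only [Multiset.mem_map, forall_exists_index, and_imp, forall_apply_eq_imp_iff₂]
    intro r hr
    have := hroot r hr
    exact ⟨inv_nonneg.2 (by linarith), inv_le_one_of_one_le₀ (by linarith)⟩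
  · have hfactor : ∀ r ∈ P.roots,
        C (1 - (1 - r)⁻¹) + C (1 - r)⁻¹ * X = C (1 - r)⁻¹ * (X - C r) := by
      intro r hr
      have hne : 1 - r ≠ 0 := by linarith [hroot r hr]
      rw [show 1 - (1 - r)⁻¹ = -((1 - r)⁻¹ * r) by field_simp; ring, C_neg, C_mul]
      ring
    have hlead : P.leadingCoeff = (P.roots.map fun r => (1 - r)⁻¹).prod := by
      rw [hP.eval_eq_prod_roots] at hone
      rw [Multiset.prod_map_inv]
      exact eq_inv_of_mul_eq_one_left hone
    rw [bernoulliProd, Multiset.map_map]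
    simp only [Function.comp_def]
    rw [Multiset.map_congr rfl hfactor, Multiset.prod_map_mul]
    nth_rewrite 1 [hP.eq_prod_roots, hlead]
    rw [map_multiset_prod, Multiset.map_map]
    rfl

lemma taylor_one_bernoulliProd (s : Multiset ℝ) :
    taylor 1 (bernoulliProd s) = (s.map fun p => 1 + C p * X).prod := by
  rw [bernoulliProd, ← taylorAlgHom_apply, map_multiset_prod, Multiset.map_map]
  refine congrArg _ (Multiset.map_congr rfl fun p _ => ?_)
  simp only [Function.comp_apply, taylorAlgHom_apply, map_add, taylor_C, taylor_mul, taylor_X]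
  rw [C_sub, C_1]
  ring

lemma coeff_zero_taylor_bernoulliProd (s : Multiset ℝ) :
    (taylor 1 (bernoulliProd s)).coeff 0 = 1 := by
  rw [taylor_one_bernoulliProd]
  induction s using Multiset.induction with
  | empty => simp
  | cons p s ih => simp [add_mul, ih, mul_assoc]

lemma coeff_one_taylor_bernoulliProd (s : Multiset ℝ) :
    (taylor 1 (bernoulliProd s)).coeff 1 = s.sum := by
  have h0 := coeff_zero_taylor_bernoulliProd
  simp only [taylor_one_bernoulliProd] at h0 ⊢
  induction s using Multiset.induction with
  | empty => simp [coeff_one]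
  | cons p s ih => simp [add_mul, ih, mul_assoc, h0, add_comm, coeff_X_mul]

lemma coeff_two_taylor_bernoulliProd (s : Multiset ℝ) :
    2 * (taylor 1 (bernoulliProd s)).coeff 2 = s.sum ^ 2 - (s.map (· ^ 2)).sum := by
  have h1 := coeff_one_taylor_bernoulliProd
  simp only [taylor_one_bernoulliProd] at h1 ⊢
  induction s using Multiset.induction with
  | empty => simp [coeff_one]
  | cons p s ih =>
    simp only [Multiset.map_cons, Multiset.prod_cons, Multiset.sum_cons, add_mul, one_mul,
      coeff_add, mul_assoc, coeff_C_mul, coeff_X_mul, h1, mul_add, ih]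
    ring

/-! ### The characteristic function of a centered Bernoulli variable -/

/-- The characteristic function of `ξ - p` at `τ`, for `ξ` a Bernoulli variable of mean `p`. -/
noncomputable def bernoulliCharFun (p τ : ℝ) : ℂ :=
  (1 - p) * cexp (-p * (τ * I)) + p * cexp ((1 - p) * (τ * I))

lemma norm_prod_sub_prod_le {ι R : Type*} [SeminormedCommRing R] [NormOneClass R]
    (s : Multiset ι) {f g : ι → R} (hf : ∀ i ∈ s, ‖f i‖ ≤ 1) (hg : ∀ i ∈ s, ‖g i‖ ≤ 1) :
    ‖(s.map f).prod - (s.map g).prod‖ ≤ (s.map fun i => ‖f i - g i‖).sum := by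
  induction s using Multiset.induction with
  | empty => simp
  | cons a s ih =>
    simp only [Multiset.mem_cons, forall_eq_or_imp] at hf hg
    have hprod : ‖(s.map g).prod‖ ≤ 1 :=
      Multiset.prod_induction (‖·‖ ≤ 1) _
        (fun x y hx hy => (norm_mul_le x y).trans (mul_le_one₀ hx (norm_nonneg y) hy))
        norm_one.le (by simpa using hg.2)
    simp only [Multiset.map_cons, Multiset.prod_cons, Multiset.sum_cons]
    calc ‖f a * (s.map f).prod - g a * (s.map g).prod‖
        = ‖(f a - g a) * (s.map g).prod + f a * ((s.map f).prod - (s.map g).prod)‖ := by ring_nf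
      _ ≤ ‖f a - g a‖ * ‖(s.map g).prod‖ + ‖f a‖ * ‖(s.map f).prod - (s.map g).prod‖ :=
        (norm_add_le _ _).trans (add_le_add (norm_mul_le _ _) (norm_mul_le _ _))
      _ ≤ ‖f a - g a‖ * 1 + 1 * (s.map fun i => ‖f i - g i‖).sum := by
        gcongr
        exacts [hf.1, ih hf.2 hg.2]
      _ = _ := by ring

lemma norm_exp_sub_quadratic_le {z : ℂ} (hz : ‖z‖ ≤ 1) :
    ‖cexp z - (1 + z + z ^ 2 / 2)‖ ≤ 2 / 9 * ‖z‖ ^ 3 := by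
  have := Complex.exp_bound hz (n := 3) (by norm_num)
  norm_num [Finset.sum_range_succ, Nat.factorial] at this
  linarith

lemma norm_bernoulliCharFun_le_one {p : ℝ} (hp : p ∈ Set.Icc (0 : ℝ) 1) (τ : ℝ) :
    ‖bernoulliCharFun p τ‖ ≤ 1 := by
  have hexp : ∀ a : ℝ, ‖cexp (a * (τ * I))‖ = 1 := fun a => by
    rw [← mul_assoc, ← ofReal_mul, norm_exp_ofReal_mul_I]
  have hneg := hexp (-p)
  have hone := hexp (1 - p)
  push_cast at hneg hone
  refine (norm_add_le _ _).trans_eq ?_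
  rw [norm_mul, norm_mul, hneg, hone, ← ofReal_one, ← ofReal_sub,
    Complex.norm_of_nonneg (sub_nonneg.2 hp.2), Complex.norm_of_nonneg hp.1]
  ring

lemma norm_bernoulliCharFun_sub_le {p : ℝ} (hp : p ∈ Set.Icc (0 : ℝ) 1) {τ : ℝ} (hτ : |τ| ≤ 1) :
    ‖bernoulliCharFun p τ - (1 - p * (1 - p) * τ ^ 2 / 2 : ℝ)‖ ≤
      2 / 9 * (p * (1 - p) * |τ| ^ 3) := by
  have hq : 0 ≤ 1 - p := sub_nonneg.2 hp.2
  have htaylor : ∀ a : ℝ, |a| ≤ 1 →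
      ‖cexp (a * (τ * I)) - (1 + a * (τ * I) + (a * (τ * I)) ^ 2 / 2)‖ ≤
        2 / 9 * (|a| ^ 3 * |τ| ^ 3) := by
    intro a ha
    have hnorm : ‖(a : ℂ) * (τ * I)‖ = |a| * |τ| := by simp
    rw [← mul_pow, ← hnorm]
    refine norm_exp_sub_quadratic_le ?_
    rw [hnorm]
    exact mul_le_one₀ ha (abs_nonneg _) hτ
  have hzero := htaylor (-p) (by rw [abs_neg, abs_of_nonneg hp.1]; exact hp.2)
  have hone := htaylor (1 - p) (by rw [abs_of_nonneg hq]; linarith [hp.1])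
  rw [abs_neg, abs_of_nonneg hp.1] at hzero
  rw [abs_of_nonneg hq] at hone
  push_cast at hzero hone
  set ε₀ := cexp (-p * (τ * I)) - (1 + -p * (τ * I) + (-p * (τ * I)) ^ 2 / 2) with hε₀
  set ε₁ := cexp ((1 - p) * (τ * I)) -
    (1 + (1 - p) * (τ * I) + ((1 - p) * (τ * I)) ^ 2 / 2) with hε₁
  have herror : bernoulliCharFun p τ - (1 - p * (1 - p) * τ ^ 2 / 2 : ℝ) =
      ((1 - p : ℝ) : ℂ) * ε₀ + (p : ℂ) * ε₁ := by
    rw [bernoulliCharFun, hε₀, hε₁]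
    push_cast
    linear_combination (p * (1 - p) * τ ^ 2 / 2 : ℂ) * I_sq
  calc ‖bernoulliCharFun p τ - (1 - p * (1 - p) * τ ^ 2 / 2 : ℝ)‖
      ≤ (1 - p) * ‖ε₀‖ + p * ‖ε₁‖ := by
        rw [herror]
        refine (norm_add_le _ _).trans_eq ?_
        rw [norm_mul, norm_mul, Complex.norm_of_nonneg hq, Complex.norm_of_nonneg hp.1]
    _ ≤ (1 - p) * (2 / 9 * (p ^ 3 * |τ| ^ 3)) + p * (2 / 9 * ((1 - p) ^ 3 * |τ| ^ 3)) :=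
        add_le_add (mul_le_mul_of_nonneg_left hzero hq) (mul_le_mul_of_nonneg_left hone hp.1)
    _ = 2 / 9 * (p * (1 - p) * |τ| ^ 3) * (1 - 2 * (p * (1 - p))) := by ring
    _ ≤ 2 / 9 * (p * (1 - p) * |τ| ^ 3) := by
        have hpq : 0 ≤ p * (1 - p) := mul_nonneg hp.1 hq
        exact mul_le_of_le_one_right (by positivity) (by linarith)

lemma abs_exp_neg_mul_sq_sub_le {v τ : ℝ} (hv : v ∈ Set.Icc (0 : ℝ) 1) (hτ : |τ| ≤ 1) :
    |Real.exp (-(v * τ ^ 2 / 2)) - (1 - v * τ ^ 2 / 2)| ≤ 1 / 4 * (v * |τ| ^ 3) := by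
  have hsq : τ ^ 2 ≤ 1 := (sq_le_one_iff_abs_le_one τ).2 hτ
  have hprod : v * τ ^ 2 ≤ 1 := mul_le_one₀ hv.2 (sq_nonneg τ) hsq
  have hnonneg : 0 ≤ v * τ ^ 2 := mul_nonneg hv.1 (sq_nonneg τ)
  have hexp := Real.norm_exp_sub_one_sub_id_le (x := -(v * τ ^ 2 / 2)) (by
    rw [norm_neg, Real.norm_of_nonneg (by positivity)]
    linarith)
  rw [Real.norm_eq_abs, norm_neg, Real.norm_of_nonneg (by positivity)] at hexp
  calc |Real.exp (-(v * τ ^ 2 / 2)) - (1 - v * τ ^ 2 / 2)|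
      = |Real.exp (-(v * τ ^ 2 / 2)) - 1 - -(v * τ ^ 2 / 2)| := by ring_nf
    _ ≤ (v * τ ^ 2 / 2) ^ 2 := hexp
    _ = 1 / 4 * (v * v * |τ| ^ 4) := by rw [pow_abs, abs_of_nonneg (by positivity)]; ring
    _ ≤ 1 / 4 * (v * 1 * |τ| ^ 3) := by
        have hpow : |τ| ^ 4 ≤ |τ| ^ 3 := pow_le_pow_of_le_one (abs_nonneg τ) hτ (by norm_num)
        have := hv.1
        gcongr
        exact hv.2
    _ = 1 / 4 * (v * |τ| ^ 3) := by ring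

lemma norm_bernoulliCharFun_sub_exp_le {p : ℝ} (hp : p ∈ Set.Icc (0 : ℝ) 1) {τ : ℝ}
    (hτ : |τ| ≤ 1) :
    ‖bernoulliCharFun p τ - (Real.exp (-(p * (1 - p) * τ ^ 2 / 2)) : ℝ)‖ ≤
      p * (1 - p) * |τ| ^ 3 := by
  have hq : 1 - p ∈ Set.Icc (0 : ℝ) 1 := Set.Icc.one_sub_mem hp
  have hv : p * (1 - p) ∈ Set.Icc (0 : ℝ) 1 := unitInterval.mul_mem hp hq
  have hgauss := abs_exp_neg_mul_sq_sub_le hv hτ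
  rw [abs_sub_comm, ← Real.norm_eq_abs, ← norm_real, ofReal_sub] at hgauss
  have hcube : 0 ≤ p * (1 - p) * |τ| ^ 3 := mul_nonneg hv.1 (by positivity)
  refine (norm_sub_le_norm_sub_add_norm_sub _ _ _).trans
    ((add_le_add (norm_bernoulliCharFun_sub_le hp hτ) hgauss).trans ?_)
  linarith

lemma norm_prod_bernoulliCharFun_sub_exp_le {s : Multiset ℝ} (hs : ∀ p ∈ s, p ∈ Set.Icc (0 : ℝ) 1)
    {τ : ℝ} (hτ : |τ| ≤ 1) :
    ‖(s.map fun p => bernoulliCharFun p τ).prod -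
        (Real.exp (-((s.map fun p => p * (1 - p)).sum * τ ^ 2 / 2)) : ℝ)‖ ≤
      (s.map fun p => p * (1 - p)).sum * |τ| ^ 3 := by
  have hgauss : (Real.exp (-((s.map fun p => p * (1 - p)).sum * τ ^ 2 / 2)) : ℂ) =
      (s.map fun p => (Real.exp (-(p * (1 - p) * τ ^ 2 / 2)) : ℂ)).prod := by
    have hsum : -((s.map fun p => p * (1 - p)).sum * τ ^ 2 / 2) =
        (s.map fun p => -(p * (1 - p) * τ ^ 2 / 2)).sum := by
      simp_rw [Multiset.sum_map_neg, Multiset.sum_map_div, Multiset.sum_map_mul_right]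
    rw [hsum, Real.exp_multiset_sum, ← ofRealHom_eq_coe, map_multiset_prod, Multiset.map_map,
      Multiset.map_map]
    rfl
  have hnorm : ∀ p ∈ s, ‖(Real.exp (-(p * (1 - p) * τ ^ 2 / 2)) : ℂ)‖ ≤ 1 := by
    intro p hp
    have hv : 0 ≤ p * (1 - p) := mul_nonneg (hs p hp).1 (sub_nonneg.2 (hs p hp).2)
    rw [norm_real, Real.norm_of_nonneg (Real.exp_nonneg _), Real.exp_le_one_iff,
      Left.neg_nonpos_iff]
    positivity
  rw [hgauss, ← Multiset.sum_map_mul_right]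
  exact (norm_prod_sub_prod_le s (fun p hp => norm_bernoulliCharFun_le_one (hs p hp) τ) hnorm).trans
    (Multiset.sum_map_le_sum_map _ _ fun p hp => norm_bernoulliCharFun_sub_exp_le (hs p hp) hτ)

/-! ### Probability generating functions with real roots -/

section PGF

variable {Ω : Type*} [MeasurableSpace Ω] {X : Ω → ℕ} {P : ℝ[X]} {μ : Measure Ω}

/-- The polynomial `P` is the probability generating function of the variable `X` under `μ`. -/
def IsPGF (X : Ω → ℕ) (P : ℝ[X]) (μ : Measure Ω) : Prop :=
  ∀ k, μ.real (X ⁻¹' {k}) = P.coeff k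

namespace IsPGF

lemma integral_comp [IsFiniteMeasure μ] (h : IsPGF X P μ) (hX : Measurable X) {E : Type*}
    [NormedAddCommGroup E] [NormedSpace ℝ E] [CompleteSpace E] (f : ℕ → E) :
    ∫ ω, f (X ω) ∂μ = P.sum fun k a => a • f k := by
  have hlaw : ∀ k, (μ.map X).real {k} = P.coeff k := fun k => by
    rw [map_measureReal_apply hX (measurableSet_singleton k), h k]
  have hsupport : ∀ᵐ k ∂μ.map X, k ∈ P.support := by
    refine ae_iff_of_countable.2 fun k hk => ?_
    rwa [mem_support_iff, ← hlaw k, measureReal_ne_zero_iff]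
  rw [← integral_map hX.aemeasurable StronglyMeasurable.of_discrete.aestronglyMeasurable,
    ← Measure.restrict_eq_self_of_ae_mem hsupport]
  exact (setIntegral_finset _ IntegrableOn.finset).trans
    (Finset.sum_congr rfl fun k _ => by rw [hlaw])

lemma integral_choose [IsFiniteMeasure μ] (h : IsPGF X P μ) (hX : Measurable X) (k : ℕ) :
    ∫ ω, ((X ω).choose k : ℝ) ∂μ = (taylor 1 P).coeff k := by
  rw [h.integral_comp hX fun j => (j.choose k : ℝ), taylor_coeff, hasseDeriv_apply,
    Polynomial.sum, Polynomial.sum, eval_finsetSum]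
  refine Finset.sum_congr rfl fun j _ => ?_
  rw [eval_monomial, one_pow, mul_one, smul_eq_mul, mul_comm]

lemma variance_eq_coeff_taylor [IsProbabilityMeasure μ] (h : IsPGF X P μ) (hX : Measurable X) :
    Var[fun ω => (X ω : ℝ); μ] =
      2 * (taylor 1 P).coeff 2 + (taylor 1 P).coeff 1 - (taylor 1 P).coeff 1 ^ 2 := by
  have hchoose : ∀ k, P.sum (fun j a => a * (j.choose k : ℝ)) = (taylor 1 P).coeff k := fun k => by
    simp_rw [← h.integral_choose hX, h.integral_comp hX fun j => (j.choose k : ℝ), smul_eq_mul]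
  have hzero : (taylor 1 P).coeff 0 = 1 := by simp [← h.integral_choose hX]
  have hmean : ∫ ω, (X ω : ℝ) ∂μ = (taylor 1 P).coeff 1 := by simp [← h.integral_choose hX]
  set m := (taylor 1 P).coeff 1
  have hsq : ∀ k : ℕ, ((k : ℝ) - m) ^ 2 =
      2 * (k.choose 2 : ℝ) + (1 - 2 * m) * (k.choose 1 : ℝ) + m ^ 2 * (k.choose 0 : ℝ) := by
    intro k
    rw [Nat.cast_choose_two, Nat.choose_one_right, Nat.choose_zero_right]
    push_cast
    ring
  rw [variance_eq_integral (by fun_prop), hmean, h.integral_comp hX fun k => ((k : ℝ) - m) ^ 2]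
  calc P.sum (fun k a => a • ((k : ℝ) - m) ^ 2)
      = 2 * P.sum (fun k a => a * (k.choose 2 : ℝ)) +
          (1 - 2 * m) * P.sum (fun k a => a * (k.choose 1 : ℝ)) +
          m ^ 2 * P.sum (fun k a => a * (k.choose 0 : ℝ)) := by
        simp only [Polynomial.sum, Finset.mul_sum, ← Finset.sum_add_distrib]
        exact Finset.sum_congr rfl fun k _ => by rw [hsq, smul_eq_mul]; ring
    _ = 2 * (taylor 1 P).coeff 2 + m - m ^ 2 := by
        rw [hchoose, hchoose, hchoose, hzero]
        ring

lemma integral_eq_sum [IsFiniteMeasure μ] {s : Multiset ℝ} (h : IsPGF X (bernoulliProd s) μ)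
    (hX : Measurable X) : ∫ ω, (X ω : ℝ) ∂μ = s.sum := by
  simp_rw [← coeff_one_taylor_bernoulliProd, ← h.integral_choose hX, Nat.choose_one_right]

lemma variance_eq_sum [IsProbabilityMeasure μ] {s : Multiset ℝ} (h : IsPGF X (bernoulliProd s) μ)
    (hX : Measurable X) :
    Var[fun ω => (X ω : ℝ); μ] = (s.map fun p => p * (1 - p)).sum := by
  rw [h.variance_eq_coeff_taylor hX, coeff_two_taylor_bernoulliProd, coeff_one_taylor_bernoulliProd]
  simp only [mul_sub, mul_one, Multiset.sum_map_sub, Multiset.map_id', sq]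
  ring

lemma integral_cexp_eq_prod [IsFiniteMeasure μ] {s : Multiset ℝ} (h : IsPGF X (bernoulliProd s) μ)
    (hX : Measurable X) (τ : ℝ) :
    ∫ ω, cexp (τ * (X ω - s.sum : ℝ) * I) ∂μ =
      (s.map fun p => bernoulliCharFun p τ).prod := by
  have hfactor : ∀ p : ℝ, cexp (-p * (τ * I)) * (1 - p + p * cexp (τ * I)) =
      bernoulliCharFun p τ := by
    intro p
    have hadd : (1 - p : ℂ) * (τ * I) = -p * (τ * I) + τ * I := by ring
    rw [bernoulliCharFun, hadd, Complex.exp_add]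
    ring
  have hsplit : ∀ k : ℕ, cexp (τ * (k - s.sum : ℝ) * I) =
      cexp (-s.sum * (τ * I)) * cexp (τ * I) ^ k := by
    intro k
    rw [← Complex.exp_nat_mul, ← Complex.exp_add]
    push_cast
    ring_nf
  have hshift : cexp (-s.sum * (τ * I)) = (s.map fun p : ℝ => cexp (-p * (τ * I))).prod := by
    have hsum : (-s.sum : ℂ) = (s.map fun p : ℝ => (-p : ℂ)).sum := by
      rw [← ofRealHom_eq_coe, map_multiset_sum, ← Multiset.sum_map_neg]
      rfl
    rw [hsum, ← Multiset.sum_map_mul_right, Complex.exp_multiset_sum, Multiset.map_map]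
    rfl
  rw [h.integral_comp hX fun k => cexp (τ * (k - s.sum : ℝ) * I)]
  calc ((bernoulliProd s).sum fun k a => a • cexp (τ * (k - s.sum : ℝ) * I))
      = cexp (-s.sum * (τ * I)) * aeval (cexp (τ * I)) (bernoulliProd s) := by
        simp only [hsplit, aeval_def, eval₂_eq_sum, Polynomial.sum, Finset.mul_sum,
          coe_algebraMap, real_smul, mul_left_comm]
    _ = (s.map fun p => bernoulliCharFun p τ).prod := by
        simp_rw [← hfactor]
        rw [Multiset.prod_map_mul, hshift, bernoulliProd, map_multiset_prod, Multiset.map_map]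
        simp

lemma coeff_nonneg (h : IsPGF X P μ) (k : ℕ) : 0 ≤ P.coeff k := h k ▸ measureReal_nonneg

lemma eval_one [IsProbabilityMeasure μ] (h : IsPGF X P μ) (hX : Measurable X) : P.eval 1 = 1 := by
  simpa using (h.integral_choose hX 0).symm

lemma norm_charFun_sub_le [IsProbabilityMeasure μ] (h : IsPGF X P μ) (hX : Measurable X)
    (hP : P.Splits) {t : ℝ} (hV : 0 < Var[fun ω => (X ω : ℝ); μ])
    (ht : |t| ≤ √Var[fun ω => (X ω : ℝ); μ]) :
    ‖charFun (μ.map fun ω => ((X ω : ℝ) - μ[fun ω => (X ω : ℝ)]) / √Var[fun ω => (X ω : ℝ); μ]) t -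
      cexp (-(t ^ 2 / 2))‖ ≤ |t| ^ 3 / √Var[fun ω => (X ω : ℝ); μ] := by
  obtain ⟨s, hs, rfl⟩ := exists_eq_bernoulliProd hP h.coeff_nonneg (h.eval_one hX)
  rw [h.variance_eq_sum hX] at hV ht ⊢
  rw [h.integral_eq_sum hX]
  set V := (s.map fun p => p * (1 - p)).sum with hVdef
  have hσ : 0 < √V := Real.sqrt_pos.2 hV
  have hτ : |t / √V| ≤ 1 := by rwa [abs_div, abs_of_pos hσ, div_le_one hσ]
  have hchar : charFun (μ.map fun ω => ((X ω : ℝ) - s.sum) / √V) t =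
      (s.map fun p => bernoulliCharFun p (t / √V)).prod := by
    rw [← h.integral_cexp_eq_prod hX, charFun_apply_real, integral_map (by fun_prop) (by fun_prop)]
    congr with ω
    push_cast
    ring_nf
  have hbound := norm_prod_bernoulliCharFun_sub_exp_le hs hτ
  rw [← hVdef] at hbound
  have hsq : V * (t / √V) ^ 2 / 2 = t ^ 2 / 2 := by
    rw [div_pow, Real.sq_sqrt hV.le]
    field_simp
  have hcube : V * |t / √V| ^ 3 = |t| ^ 3 / √V := by
    rw [abs_div, abs_of_pos hσ, div_pow, pow_succ √V, Real.sq_sqrt hV.le]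
    field_simp
  rw [hsq, hcube] at hbound
  rw [hchar]
  simpa using hbound

end IsPGF

end PGF

theorem tendstoInDistribution_of_splits {Ω : ℕ → Type*} [∀ n, MeasurableSpace (Ω n)]
    {μ : ∀ n, Measure (Ω n)} [∀ n, IsProbabilityMeasure (μ n)] {X : ∀ n, Ω n → ℕ} {P : ℕ → ℝ[X]}
    (hX : ∀ n, Measurable (X n)) (hpgf : ∀ n, IsPGF (X n) (P n) (μ n)) (hP : ∀ n, (P n).Splits)
    (hV : Tendsto (fun n => Var[fun ω => (X n ω : ℝ); μ n]) atTop atTop) :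
    TendstoInDistribution
      (fun n ω => ((X n ω : ℝ) - (μ n)[fun ω => (X n ω : ℝ)]) / √Var[fun ω => (X n ω : ℝ); μ n])
      atTop id μ (gaussianReal 0 1) where
  forall_aemeasurable n := by have := hX n; fun_prop
  tendsto := by
    refine ProbabilityMeasure.tendsto_iff_tendsto_charFun.2 fun t => ?_
    have hσ := Real.tendsto_sqrt_atTop.comp hV
    rw [tendsto_iff_norm_sub_tendsto_zero]
    refine squeeze_zero' (.of_forall fun _ => norm_nonneg _) ?_
      (hσ.const_div_atTop (|t| ^ 3))
    filter_upwards [hV.eventually_gt_atTop 0, hσ.eventually_ge_atTop |t|] with n hn ht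
    simpa [charFun_gaussianReal] using (hpgf n).norm_charFun_sub_le (hX n) (hP n) hn ht

/-! ### Trees with prescribed leaves -/

section Graphs

variable {V W A B : Type*}

/-- A leaf of a graph, as a vertex with exactly one neighbor. -/
def IsLeaf (T : SimpleGraph V) (v : V) : Prop := ∃! w, T.Adj v w

lemma IsLeaf.subsingleton_neighborSet {T : SimpleGraph V} {v : V} (hv : IsLeaf T v) :
    (T.neighborSet v).Subsingleton := fun _ hx _ hy => hv.unique hx hy

lemma isLeaf_iff_card_neighborSet {T : SimpleGraph V} {v : V} :
    IsLeaf T v ↔ Nat.card (T.neighborSet v) = 1 := by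
  rw [Nat.card_eq_one_iff_unique, ← unique_iff_subsingleton_and_nonempty]
  exact (unique_subtype_iff_existsUnique _).symm

lemma isLeaf_apply_iff {G : SimpleGraph V} {H : SimpleGraph W} (e : G ≃g H) (v : V) :
    IsLeaf H (e v) ↔ IsLeaf G v := by
  rw [isLeaf_iff_card_neighborSet, isLeaf_iff_card_neighborSet,
    Nat.card_congr (e.mapNeighborSet v)]

lemma eq_or_eq_of_adj_leaves {T : SimpleGraph V} (hT : T.Connected) {u v : V}
    (huv : T.Adj u v) (hu : IsLeaf T u) (hv : IsLeaf T v) (x : V) : x = u ∨ x = v := by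
  have hux := (SimpleGraph.reachable_iff_reflTransGen u x).1 (hT.preconnected u x)
  induction hux with
  | refl => exact .inl rfl
  | tail _ hbc ih =>
    rcases ih with rfl | rfl
    · exact .inr (hu.unique hbc huv)
    · exact .inl (hv.unique hbc huv.symm)

lemma card_le_two_of_forall_isLeaf {T : SimpleGraph V} (hT : T.Connected)
    (hleaf : ∀ v, IsLeaf T v) : Nat.card V ≤ 2 := by
  obtain ⟨u⟩ := hT.nonempty
  obtain ⟨v, huv, -⟩ := hleaf u
  have huniv : (Set.univ : Set V) = {u, v} := (Set.eq_univ_of_forall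
    (eq_or_eq_of_adj_leaves hT huv (hleaf u) (hleaf v))).symm
  rw [← Set.ncard_univ, huniv]
  exact (Set.ncard_insert_le u {v}).trans_eq (by rw [Set.ncard_singleton])

lemma isAcyclic_of_isAcyclic_induce {G : SimpleGraph V} {s : Set V}
    (hs : ∀ v ∉ s, (G.neighborSet v).Subsingleton) (hG : (G.induce s).IsAcyclic) :
    G.IsAcyclic := by
  intro u c hc
  have hsupport : ∀ v ∈ c.support, v ∈ s := by
    intro v hv
    by_contra hvs
    have hsub : (c.toSubgraph.neighborSet v).Subsingleton :=
      (hs v hvs).anti (c.toSubgraph.neighborSet_subset v)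
    obtain ⟨x, y, hxy, hpair⟩ := Set.ncard_eq_two.1 (hc.ncard_neighborSet_toSubgraph_eq_two hv)
    rw [hpair] at hsub
    exact hxy (hsub (Set.mem_insert x _) (Set.mem_insert_of_mem x rfl))
  refine hG (c.induce s hsupport) (.of_map (f := (SimpleGraph.Embedding.induce s).toHom) ?_)
  rwa [SimpleGraph.Walk.map_induce]

/-- The graph on `A ⊕ B` obtained from `T` by joining each new vertex `b : B` to `g b` only. -/
def attach (T : SimpleGraph A) (g : B → A) : SimpleGraph (A ⊕ B) where
  Adj
    | .inl a, .inl a' => T.Adj a a'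
    | .inl a, .inr b => g b = a
    | .inr b, .inl a => g b = a
    | .inr _, .inr _ => False
  symm := ⟨by rintro (a | b) (a' | b') h <;> first | exact h.symm | exact h⟩
  loopless := ⟨by rintro (a | b) h <;> [exact T.loopless.irrefl a h; exact h]⟩

section Attach

variable (T : SimpleGraph A) (g : B → A)

@[simp] lemma attach_adj_inl_inl {a a' : A} :
    (attach T g).Adj (.inl a) (.inl a') ↔ T.Adj a a' := Iff.rfl

@[simp] lemma attach_adj_inl_inr {a : A} {b : B} :
    (attach T g).Adj (.inl a) (.inr b) ↔ g b = a := Iff.rfl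

@[simp] lemma attach_adj_inr_inl {a : A} {b : B} :
    (attach T g).Adj (.inr b) (.inl a) ↔ g b = a := Iff.rfl

@[simp] lemma not_attach_adj_inr_inr {b b' : B} :
    ¬ (attach T g).Adj (.inr b) (.inr b') := id

/-- The inclusion of `T` into `attach T g`. -/
def attachInl : T ↪g attach T g := ⟨.inl, Iff.rfl⟩

lemma isLeaf_attach_inr (b : B) : IsLeaf (attach T g) (.inr b) :=
  ⟨.inl (g b), rfl, by
    rintro (a | b') h
    · exact congrArg _ (Eq.symm h)
    · exact h.elim⟩

variable {T}

lemma attach_connected (hT : T.Connected) : (attach T g).Connected := by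
  obtain ⟨a₀⟩ := hT.nonempty
  have hinl : ∀ a, (attach T g).Reachable (.inl a₀) (.inl a) := fun a =>
    (hT.preconnected a₀ a).map (attachInl T g).toHom
  refine (attach T g).connected_iff_exists_forall_reachable.2 ⟨.inl a₀, ?_⟩
  rintro (a | b)
  · exact hinl a
  · exact (hinl (g b)).trans (SimpleGraph.Adj.reachable rfl)

lemma attach_isTree (hT : T.IsTree) : (attach T g).IsTree where
  connected := attach_connected g hT.connected
  isAcyclic := by
    refine isAcyclic_of_isAcyclic_induce (s := Set.range Sum.inl) ?_
      ((attachInl T g).isoInduceRange.isAcyclic_iff.1 hT.isAcyclic)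
    rintro (a | b) hv
    · exact (hv ⟨a, rfl⟩).elim
    · exact (isLeaf_attach_inr T g b).subsingleton_neighborSet

end Attach

lemma attach_injective2 : Function.Injective2 (attach (A := A) (B := B)) := by
  intro T T' g g' h
  refine ⟨?_, funext fun b => ?_⟩
  · ext a a'
    rw [← attach_adj_inl_inl T g, h, attach_adj_inl_inl]
  · rw [eq_comm, ← attach_adj_inr_inl T' g', ← h, attach_adj_inr_inl]

lemma comap_inl_isTree [Nonempty A] {T : SimpleGraph (A ⊕ B)} (hT : T.IsTree)
    (hleaf : ∀ b, IsLeaf T (.inr b)) : (T.comap (Sum.inl : A → A ⊕ B)).IsTree := by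
  have hpre : (T.induce (Set.range (Sum.inl : A → A ⊕ B))).Preconnected := by
    refine hT.connected.preconnected.induce_of_degree_eq_one ?_
    rintro (a | b) hv
    · exact (hv ⟨a, rfl⟩).elim
    · exact (hleaf b).subsingleton_neighborSet
  let e : T.comap (Sum.inl : A → A ⊕ B) ↪g T := .comap .inl T
  have := e.isoInduceRange.preconnected_iff.2 hpre
  exact ⟨⟨this⟩, hT.isAcyclic.of_comap .inl⟩

lemma exists_adj_inl [Nonempty A] {T : SimpleGraph (A ⊕ B)} (hT : T.Connected)
    (hleaf : ∀ b, IsLeaf T (.inr b)) (b : B) : ∃ a, T.Adj (.inr b) (.inl a) := by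
  obtain ⟨a | b', hadj, -⟩ := hleaf b
  · exact ⟨a, hadj⟩
  · obtain ⟨a⟩ := ‹Nonempty A›
    simpa only [reduceCtorEq, or_self] using
      eq_or_eq_of_adj_leaves hT hadj (hleaf b) (hleaf b') (.inl a)

lemma exists_attach_eq [Nonempty A] {T : SimpleGraph (A ⊕ B)} (hT : T.Connected)
    (hleaf : ∀ b, IsLeaf T (.inr b)) : ∃ g : B → A, attach (T.comap Sum.inl) g = T := by
  choose g hg using exists_adj_inl hT hleaf
  have hadj : ∀ b x, T.Adj (.inr b) x ↔ x = .inl (g b) := fun b x =>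
    ⟨fun hx => (hleaf b).unique hx (hg b), fun hx => hx ▸ hg b⟩
  refine ⟨g, ?_⟩
  ext (a | b) (a' | b')
  · rfl
  · rw [T.adj_comm, hadj, attach_adj_inl_inr, Sum.inl.injEq, eq_comm]
  · rw [hadj, attach_adj_inr_inl, Sum.inl.injEq, eq_comm]
  · simp only [hadj, not_attach_adj_inr_inr, reduceCtorEq]

lemma card_trees_inr_leaves [Finite B] [Nonempty A] :
    Nat.card {T : SimpleGraph (A ⊕ B) // T.IsTree ∧ ∀ b, IsLeaf T (.inr b)} =
      Nat.card A ^ Nat.card B * Nat.card {T : SimpleGraph A // T.IsTree} := by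
  let F : {T : SimpleGraph A // T.IsTree} × (B → A) →
      {T : SimpleGraph (A ⊕ B) // T.IsTree ∧ ∀ b, IsLeaf T (.inr b)} :=
    fun p => ⟨attach p.1.1 p.2, attach_isTree _ p.1.2, isLeaf_attach_inr _ _⟩
  have hF : Function.Bijective F := by
    constructor
    · rintro ⟨⟨T, hT⟩, g⟩ ⟨⟨T', hT'⟩, g'⟩ h
      obtain ⟨rfl, rfl⟩ := attach_injective2 (congrArg Subtype.val h)
      rfl
    · rintro ⟨T, hT, hleaf⟩
      obtain ⟨g, hg⟩ := exists_attach_eq hT.connected hleaf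
      exact ⟨⟨⟨_, comap_inl_isTree hT hleaf⟩, g⟩, Subtype.ext hg⟩
  rw [← Nat.card_eq_of_bijective F hF, Nat.card_prod, Nat.card_fun, mul_comm]

lemma card_trees_leaves_congr (e : V ≃ W) (S : Set V) :
    Nat.card {T : SimpleGraph V // T.IsTree ∧ ∀ v ∈ S, IsLeaf T v} =
      Nat.card {T : SimpleGraph W // T.IsTree ∧ ∀ w ∈ e '' S, IsLeaf T w} := by
  refine Nat.card_congr (e.simpleGraph.subtypeEquiv fun T => ?_)
  let i : T ≃g e.simpleGraph T := (SimpleGraph.Iso.comap e.symm T).symm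
  rw [i.isTree_iff, Set.forall_mem_image]
  exact and_congr_right fun _ => forall₂_congr fun v _ => (isLeaf_apply_iff i v).symm

end Graphs

/-- The number of labeled trees on `n` vertices. -/
noncomputable def treeCount (n : ℕ) : ℕ := Nat.card {T : SimpleGraph (Fin n) // T.IsTree}

lemma card_trees_eq_treeCount (V : Type*) [Finite V] :
    Nat.card {T : SimpleGraph V // T.IsTree} = treeCount (Nat.card V) := by
  simpa [treeCount] using card_trees_leaves_congr (Finite.equivFin V) ∅

lemma treeCount_zero : treeCount 0 = 0 := by
  have : IsEmpty {T : SimpleGraph (Fin 0) // T.IsTree} :=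
    ⟨fun T => T.2.connected.nonempty.elim Fin.elim0⟩
  exact Nat.card_of_isEmpty

lemma treeCount_one : treeCount 1 = 1 :=
  Nat.card_eq_one_iff_unique.2 ⟨⟨fun _ _ => Subtype.ext (Subsingleton.elim _ _)⟩,
    ⟨⊥, .of_subsingleton⟩⟩

lemma treeCount_two : treeCount 2 = 1 := by
  have htop : ∀ T : SimpleGraph (Fin 2), T.Connected → T = ⊤ := by
    intro T hT
    have hadj : T.Adj 0 1 := by
      obtain ⟨w, hw⟩ := hT.preconnected.exists_adj_of_nontrivial 0
      rwa [Fin.eq_one_of_ne_zero w hw.ne'] at hw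
    rw [SimpleGraph.eq_top_iff_forall_ne_adj]
    intro x y hxy
    fin_cases x <;> fin_cases y
    exacts [(hxy rfl).elim, hadj, hadj.symm, (hxy rfl).elim]
  refine Nat.card_eq_one_iff_unique.2 ⟨⟨fun S T => Subtype.ext ?_⟩,
    ⟨⊤, SimpleGraph.connected_top, .of_card_le_two ?_⟩⟩
  · rw [htop S S.2.connected, htop T T.2.connected]
  · exact (ENat.card_eq_coe_natCard (Fin 2)).trans_le (by simp)

lemma card_trees_leaves {V : Type*} [Finite V] (hV : 3 ≤ Nat.card V) (S : Set V) :
    Nat.card {T : SimpleGraph V // T.IsTree ∧ ∀ v ∈ S, IsLeaf T v} =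
      Sᶜ.ncard ^ S.ncard * treeCount Sᶜ.ncard := by
  rcases isEmpty_or_nonempty ↥Sᶜ with hempty | hnonempty
  · have hS : Sᶜ = ∅ := Set.isEmpty_coe_sort.1 hempty
    have : IsEmpty {T : SimpleGraph V // T.IsTree ∧ ∀ v ∈ S, IsLeaf T v} := by
      refine ⟨fun ⟨T, hT, hleaf⟩ => ?_⟩
      have hall : ∀ v, IsLeaf T v := fun v => hleaf v (Set.compl_empty_iff.1 hS ▸ Set.mem_univ v)
      have := card_le_two_of_forall_isLeaf hT.connected hall
      omega
    rw [Nat.card_of_isEmpty, hS, Set.ncard_empty, treeCount_zero, mul_zero]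
  · classical
    let e : ↥Sᶜ ⊕ ↥S ≃ V := (Equiv.sumComm _ _).trans (Equiv.Set.sumCompl S)
    have hS : e '' Set.range Sum.inr = S := by
      rw [← Set.range_comp]
      exact Subtype.range_coe
    have hcongr := card_trees_leaves_congr e (Set.range Sum.inr)
    rw [hS] at hcongr
    simp_rw [← hcongr, Set.forall_mem_range]
    rw [card_trees_inr_leaves, card_trees_eq_treeCount, Nat.card_coe_set_eq, Nat.card_coe_set_eq]

/-! ### Factorial moments of the number of leaves -/

/-- The type of labeled trees on `[n]`. -/
abbrev LabeledTree (n : ℕ) := {T : SimpleGraph (Fin n) // T.IsTree}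

noncomputable instance (n : ℕ) : Fintype (LabeledTree n) := Fintype.ofFinite _

open Classical in
/-- The set of leaves of a graph. -/
noncomputable def leafSet {V : Type*} [Fintype V] (T : SimpleGraph V) : Finset V :=
  {v | IsLeaf T v}

lemma mem_leafSet {V : Type*} [Fintype V] {T : SimpleGraph V} {v : V} :
    v ∈ leafSet T ↔ IsLeaf T v := by
  simp only [leafSet, Finset.mem_filter_univ]

lemma card_leafSet {n : ℕ} (T : SimpleGraph (Fin n)) : (leafSet T).card = leafCount T := by
  simp_rw [leafCount, ← isLeaf_iff_card_neighborSet, ← mem_leafSet]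
  exact (Nat.card_eq_finsetCard _).symm

lemma leafCount_pos {n : ℕ} (hn : 2 ≤ n) (T : LabeledTree n) : 0 < leafCount T.1 := by
  classical
  have : Nontrivial (Fin n) := Fin.nontrivial_iff_two_le.2 hn
  obtain ⟨v, hv⟩ := T.2.exists_vert_degree_one_of_nontrivial
  rw [← card_leafSet, Finset.card_pos]
  exact ⟨v, mem_leafSet.2 (SimpleGraph.degree_eq_one_iff_existsUnique_adj.1 hv)⟩

lemma leafCount_le {n : ℕ} (T : SimpleGraph (Fin n)) : leafCount T ≤ n := by
  rw [← card_leafSet]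
  exact card_finset_fin_le _

open Classical in
lemma card_filter_subset_leafSet {n : ℕ} (hn : 3 ≤ n) (S : Finset (Fin n)) :
    Finset.card {T : LabeledTree n | S ⊆ leafSet T.1} =
      (n - S.card) ^ S.card * treeCount (n - S.card) := by
  have hcount := card_trees_leaves (V := Fin n) (by simpa using hn) S
  rw [Set.ncard_compl, Set.ncard_coe_finset, Nat.card_fin] at hcount
  rw [← hcount, ← Fintype.card_subtype, ← Nat.card_eq_fintype_card]
  refine Nat.card_congr ((Equiv.subtypeSubtypeEquivSubtypeInter _ fun T => S ⊆ leafSet T).trans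
    (Equiv.subtypeEquivRight fun T => ?_))
  simp only [Finset.subset_iff, mem_leafSet, SetLike.mem_coe]

lemma sum_choose_leafCount_eq_treeCount {n : ℕ} (hn : 3 ≤ n) (k : ℕ) :
    ∑ T : LabeledTree n, (leafCount T.1).choose k =
      n.choose k * ((n - k) ^ k * treeCount (n - k)) := by
  classical
  calc ∑ T : LabeledTree n, (leafCount T.1).choose k
      = ∑ T : LabeledTree n,
          ((Finset.univ.powersetCard k).bipartiteAbove (fun T S => S ⊆ leafSet T.1) T).card := by
        refine Finset.sum_congr rfl fun T _ => ?_
        rw [← card_leafSet, ← Finset.card_powersetCard]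
        congr 1 with S
        simp only [Finset.mem_powersetCard, Finset.mem_bipartiteAbove, Finset.subset_univ,
          true_and, and_comm]
    _ = ∑ S ∈ Finset.univ.powersetCard k,
          Finset.card {T : LabeledTree n | S ⊆ leafSet T.1} :=
        Finset.sum_card_bipartiteAbove_eq_sum_card_bipartiteBelow _
    _ = ∑ _ ∈ (Finset.univ : Finset (Fin n)).powersetCard k,
          (n - k) ^ k * treeCount (n - k) := by
        refine Finset.sum_congr rfl fun _ hS => ?_
        rw [card_filter_subset_leafSet hn, (Finset.mem_powersetCard.1 hS).2]
    _ = n.choose k * ((n - k) ^ k * treeCount (n - k)) := by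
        rw [Finset.sum_const, Finset.card_powersetCard, Finset.card_fin, smul_eq_mul]

lemma sum_range_neg_one_pow_mul_choose {m n : ℕ} (hm : 0 < m) (hmn : m ≤ n) :
    ∑ k ∈ Finset.range (n + 1), ((-1) ^ k * m.choose k : ℤ) = 0 := by
  obtain ⟨m, rfl⟩ := Nat.exists_eq_add_one.2 hm
  rw [Int.alternating_sum_range_choose_eq_choose, Nat.choose_eq_zero_of_lt hmn, Nat.cast_zero,
    mul_zero]

lemma sum_range_neg_one_pow_mul_choose_mul_pow {j n : ℕ} (hj : j < n) :
    ∑ k ∈ Finset.range (n + 1), ((-1) ^ k * (n.choose k * (n - k) ^ j : ℕ) : ℤ) = 0 := by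
  have hdiff := congrFun (fwdDiff_iter_pow_eq_zero_of_lt (R := ℤ) hj) 0
  rw [fwdDiff_iter_eq_sum_shift, ← Finset.sum_range_reflect] at hdiff
  refine Eq.trans (Finset.sum_congr rfl fun k hk => ?_) hdiff
  have hkn : k ≤ n := Finset.mem_range_succ_iff.1 hk
  rw [Nat.add_sub_cancel, Nat.choose_symm hkn, Nat.sub_sub_self hkn]
  simp [mul_assoc]

lemma pow_mul_treeCount_sub {n k : ℕ} (hn : 3 ≤ n) (hkn : k ≤ n)
    (hcayley : n - k ≠ 0 → treeCount (n - k) = (n - k) ^ (n - k - 2)) :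
    (n - k) ^ k * treeCount (n - k) = (n - k) ^ (n - 2) := by
  obtain h0 | h1 | h2 : n - k = 0 ∨ n - k = 1 ∨ 2 ≤ n - k := by omega
  · rw [h0, treeCount_zero, mul_zero, zero_pow (by omega)]
  · rw [h1, treeCount_one, one_pow, one_pow, one_mul]
  · rw [hcayley (by omega), ← pow_add]
    congr 1
    omega

theorem treeCount_eq_pow {n : ℕ} (hn : n ≠ 0) : treeCount n = n ^ (n - 2) := by
  induction n using Nat.strong_induction_on with
  | _ n ih =>
    obtain rfl | rfl | h3 : n = 1 ∨ n = 2 ∨ 3 ≤ n := by omega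
    · exact treeCount_one
    · exact treeCount_two
    have htrees : ∑ k ∈ Finset.range (n + 1),
        ((-1) ^ k * (n.choose k * ((n - k) ^ k * treeCount (n - k)) : ℕ) : ℤ) = 0 := by
      simp_rw [← sum_choose_leafCount_eq_treeCount h3, Nat.cast_sum, Finset.mul_sum]
      rw [Finset.sum_comm]
      exact Finset.sum_eq_zero fun T _ =>
        sum_range_neg_one_pow_mul_choose (leafCount_pos (by omega) T) (leafCount_le _)
    have hpowers := sum_range_neg_one_pow_mul_choose_mul_pow (show n - 2 < n by omega)
    have hpos : ∀ k ∈ Finset.range n,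
        (n - (k + 1)) ^ (k + 1) * treeCount (n - (k + 1)) = (n - (k + 1)) ^ (n - 2) := fun k hk =>
      pow_mul_treeCount_sub h3 (Finset.mem_range.1 hk) (ih _ (by omega))
    rw [Finset.sum_range_succ'] at htrees hpowers
    rw [Finset.sum_congr rfl fun k hk => by rw [hpos k hk]] at htrees
    have hzero := add_left_cancel (htrees.trans hpowers.symm)
    rw [pow_zero, one_mul, one_mul, Nat.cast_inj] at hzero
    simpa using hzero

lemma sum_choose_leafCount {n : ℕ} (hn : 3 ≤ n) (k : ℕ) :
    ∑ T : LabeledTree n, (leafCount T.1).choose k = n.choose k * (n - k) ^ (n - 2) := by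
  rw [sum_choose_leafCount_eq_treeCount hn]
  rcases le_or_gt k n with hkn | hkn
  · rw [pow_mul_treeCount_sub hn hkn treeCount_eq_pow]
  · rw [Nat.choose_eq_zero_of_lt hkn, zero_mul, zero_mul]

/-! ### The generating function of the number of leaves -/

/-- The generating polynomial of the labeled trees on `[n]` by their number of leaves. -/
noncomputable def leafPolynomial (n : ℕ) : ℝ[X] := ∑ T : LabeledTree n, X ^ leafCount T.1

lemma coeff_taylor_leafPolynomial {n : ℕ} (hn : 3 ≤ n) (k : ℕ) :
    (taylor 1 (leafPolynomial n)).coeff k = n.choose k * ((n - k : ℕ) : ℝ) ^ (n - 2) := by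
  calc (taylor 1 (leafPolynomial n)).coeff k
      = ((∑ T : LabeledTree n, (leafCount T.1).choose k : ℕ) : ℝ) := by
        simp only [leafPolynomial, map_sum, taylor_X_pow, finsetSum_coeff, C_1,
          coeff_X_add_one_pow, Nat.cast_sum]
    _ = n.choose k * ((n - k : ℕ) : ℝ) ^ (n - 2) := by
        rw [sum_choose_leafCount hn, Nat.cast_mul, Nat.cast_pow]

lemma taylor_leafPolynomial {n : ℕ} (hn : 3 ≤ n) :
    taylor 1 (leafPolynomial n) = (eulerOperator^[n - 2] ((X + 1) ^ n)).reverse := by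
  have hcoeff : ∀ k, (eulerOperator^[n - 2] ((X + 1 : ℝ[X]) ^ n)).coeff k =
      (k : ℝ) ^ (n - 2) * n.choose k := fun k => by
    rw [coeff_eulerOperator_iterate, coeff_X_add_one_pow]
  have hdegree : (eulerOperator^[n - 2] ((X + 1 : ℝ[X]) ^ n)).natDegree = n := by
    refine natDegree_eq_of_le_of_coeff_ne_zero (natDegree_le_iff_coeff_eq_zero.2 fun k hk => ?_) ?_
    · rw [hcoeff, Nat.choose_eq_zero_of_lt hk, Nat.cast_zero, mul_zero]
    · rw [hcoeff, Nat.choose_self, Nat.cast_one, mul_one]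
      exact pow_ne_zero _ (Nat.cast_ne_zero.2 (by omega))
  ext k
  rw [coeff_taylor_leafPolynomial hn, coeff_reverse, hdegree, hcoeff]
  rcases le_or_gt k n with hk | hk
  · rw [revAt_le hk, Nat.choose_symm hk, mul_comm]
  · rw [revAt_eq_self_of_lt hk, Nat.choose_eq_zero_of_lt hk, Nat.cast_zero, zero_mul, mul_zero]

lemma splits_leafPolynomial {n : ℕ} (hn : 3 ≤ n) : (leafPolynomial n).Splits := by
  refine splits_of_splits_taylor (r := 1) ?_
  rw [taylor_leafPolynomial hn]
  exact splits_reverse (splits_eulerOperator_iterate _ ((C_1 (R := ℝ) ▸ Splits.X_add_C 1).pow n))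

lemma isProbabilityMeasure_treeUniform {n : ℕ} (hn : n ≠ 0) :
    IsProbabilityMeasure (treeUniform n) := by
  have hcard : (treeCount n : ENNReal) ≠ 0 := by
    rw [treeCount_eq_pow hn]
    exact Nat.cast_ne_zero.2 (pow_ne_zero _ hn)
  refine ⟨?_⟩
  rw [treeUniform, Measure.smul_apply, Measure.count_univ, smul_eq_mul, ENat.card_eq_coe_natCard]
  exact ENNReal.inv_mul_cancel hcard (ENNReal.natCast_ne_top _)

lemma isPGF_leafCount (n : ℕ) :
    IsPGF (fun T : LabeledTree n => leafCount T.1) (C (treeCount n : ℝ)⁻¹ * leafPolynomial n)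
      (treeUniform n) := by
  classical
  intro k
  have hcard : Measure.count.real ((fun T : LabeledTree n => leafCount T.1) ⁻¹' {k}) =
      Finset.card {T : LabeledTree n | leafCount T.1 = k} := by
    have hfiber : (fun T : LabeledTree n => leafCount T.1) ⁻¹' {k} =
        (({T | leafCount T.1 = k} : Finset (LabeledTree n)) : Set (LabeledTree n)) := by
      ext T
      simp only [Set.mem_preimage, Set.mem_singleton_iff, Finset.coe_filter_univ, Set.mem_ofPred_eq]
    rw [hfiber, measureReal_def, Measure.count_apply_finset, ENNReal.toReal_natCast]
  rw [treeUniform, measureReal_ennreal_smul_apply, hcard, coeff_C_mul, ENNReal.toReal_inv,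
    ENNReal.toReal_natCast]
  simp [leafPolynomial, coeff_X_pow, treeCount, eq_comm]

/-! ### The variance of the number of leaves -/

lemma tendsto_one_add_div_pow_sub (t : ℝ) (j : ℕ) :
    Tendsto (fun n : ℕ => (1 + t / n) ^ (n - j)) atTop (𝓝 (Real.exp t)) := by
  have hbase : Tendsto (fun n : ℕ => 1 + t / (n : ℝ)) atTop (𝓝 1) := by
    simpa using (tendsto_const_div_atTop_nhds_zero_nat t).const_add 1
  have hquot := (Real.tendsto_one_add_div_pow_exp t).div (hbase.pow j) (by simp)
  rw [one_pow, div_one] at hquot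
  refine hquot.congr' ?_
  filter_upwards [eventually_gt_atTop j] with n hj
  rw [Pi.div_apply, pow_sub_of_lt _ hj, div_eq_mul_inv]

lemma variance_leafCount {n : ℕ} (hn : 3 ≤ n) :
    Var[fun T : LabeledTree n => (leafCount T.1 : ℝ); treeUniform n] =
      n * ((n - 1) * (1 + (-2) / n) ^ (n - 2) + (1 + (-1) / n) ^ (n - 2) -
        n * ((1 + (-1) / n) ^ (n - 2)) ^ 2) := by
  have hn0 : (n : ℝ) ≠ 0 := Nat.cast_ne_zero.2 (by omega)
  have := isProbabilityMeasure_treeUniform (n := n) (by omega)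
  have hcoeff : ∀ k ≤ n, (taylor 1 (C (treeCount n : ℝ)⁻¹ * leafPolynomial n)).coeff k =
      n.choose k * (1 + (-k) / n) ^ (n - 2) := by
    intro k hk
    have hbase : 1 + (-k : ℝ) / n = (n - k : ℕ) / n := by
      rw [Nat.cast_sub hk]
      field_simp
      ring
    rw [taylor_mul, taylor_C, coeff_C_mul, coeff_taylor_leafPolynomial hn,
      treeCount_eq_pow (by omega), hbase, div_pow, Nat.cast_pow]
    ring
  have hone := hcoeff 1 (by omega)
  have htwo := hcoeff 2 (by omega)
  rw [Nat.choose_one_right, Nat.cast_one] at hone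
  rw [Nat.cast_choose_two, Nat.cast_ofNat] at htwo
  rw [(isPGF_leafCount n).variance_eq_coeff_taylor .of_discrete, hone, htwo]
  ring

lemma sub_two_mul_pow_sq_le {n : ℕ} (hn : 3 ≤ n) :
    ((n : ℝ) - 2) * ((1 + (-1) / n) ^ (n - 2)) ^ 2 ≤ (n - 1) * (1 + (-2) / n) ^ (n - 2) := by
  have hn' : (3 : ℝ) ≤ n := by exact_mod_cast hn
  have hn1 : (0 : ℝ) < n - 1 := by linarith
  have hfactor : (1 + (-2) / n : ℝ) = (1 + (-1) / n) ^ 2 * (1 + -(1 / (n - 1) ^ 2)) := by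
    have : (n : ℝ) ≠ 0 := Nat.cast_ne_zero.2 (by omega)
    field_simp
    ring
  have hbernoulli : 1 + ((n - 2 : ℕ) : ℝ) * -(1 / (n - 1) ^ 2) ≤
      (1 + -(1 / (n - 1 : ℝ) ^ 2)) ^ (n - 2) := by
    refine one_add_mul_le_pow ?_ _
    have : 1 / (n - 1 : ℝ) ^ 2 ≤ 1 := (div_le_one (by positivity)).2 (by nlinarith)
    linarith
  rw [Nat.cast_sub (by omega), Nat.cast_ofNat] at hbernoulli
  have hlinear : (n - 2 : ℝ) ≤ (n - 1) * (1 + (n - 2) * -(1 / (n - 1) ^ 2)) := by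
    have : (n - 2) / (n - 1) ≤ (1 : ℝ) := (div_le_one hn1).2 (by linarith)
    calc (n - 2 : ℝ) ≤ (n - 1) - (n - 2) / (n - 1) := by linarith
      _ = _ := by field_simp; ring
  calc ((n : ℝ) - 2) * ((1 + (-1) / n) ^ (n - 2)) ^ 2
      ≤ ((n - 1 : ℝ) * (1 + -(1 / (n - 1) ^ 2)) ^ (n - 2)) * ((1 + (-1) / n) ^ (n - 2)) ^ 2 := by
        gcongr
        exact hlinear.trans (mul_le_mul_of_nonneg_left hbernoulli hn1.le)
    _ = (n - 1 : ℝ) * (1 + (-2) / n) ^ (n - 2) := by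
        rw [hfactor, mul_pow, ← pow_mul, ← pow_mul, mul_comm 2]
        ring

lemma tendsto_variance_leafCount :
    Tendsto (fun n => Var[fun T : LabeledTree n => (leafCount T.1 : ℝ); treeUniform n])
      atTop atTop := by
  have hp := tendsto_one_add_div_pow_sub (-1) 2
  have hlimit : 0 < Real.exp (-1) * (1 - 2 * Real.exp (-1)) := by
    have : Real.exp (-1) < 1 / 2 := by
      rw [Real.exp_neg, one_div]
      exact inv_strictAnti₀ two_pos (by linarith [Real.exp_one_gt_d9])
    exact mul_pos (Real.exp_pos _) (by linarith)
  have hlower := tendsto_natCast_atTop_atTop.atTop_mul_pos hlimit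
    (hp.mul ((hp.const_mul 2).const_sub 1))
  refine tendsto_atTop_mono' _ ?_ hlower
  filter_upwards [eventually_ge_atTop 3] with n hn
  rw [variance_leafCount hn]
  gcongr
  linarith [sub_two_mul_pow_sq_le hn]

end LeavesCLT

/-- Central limit theorem for the number of leaves: the law of
`T ↦ (ℓ(T) − E_n)/√V_n` under the uniform measure on labeled trees on `[n]` converges
weakly to the standard Gaussian `N(0,1)` as `n → ∞` (weak convergence being tested
against bounded continuous functions). -/
theorem leaves_clt :
    ∀ f : BoundedContinuousFunction ℝ ℝ,
      Filter.Tendsto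
        (fun n : ℕ => ∫ x, f x ∂((treeUniform n).map
          (fun T => ((leafCount T.val : ℝ) - En n) / Real.sqrt (Vn n))))
        Filter.atTop
        (nhds (∫ x, f x ∂(ProbabilityTheory.gaussianReal 0 1))) := by
  intro f
  have hVn : ∀ n, Vn n =
      ProbabilityTheory.variance (fun T => (leafCount T.val : ℝ)) (treeUniform n) := fun n =>
    (ProbabilityTheory.variance_eq_integral Measurable.of_discrete.aemeasurable).symm
  have hprob : ∀ n, IsProbabilityMeasure (treeUniform (n + 3)) := fun n =>
    LeavesCLT.isProbabilityMeasure_treeUniform (Nat.succ_ne_zero _)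
  have hclt := LeavesCLT.tendstoInDistribution_of_splits
    (X := fun n (T : LeavesCLT.LabeledTree (n + 3)) => leafCount T.val)
    (fun n => .of_discrete)
    (fun n => LeavesCLT.isPGF_leafCount (n + 3))
    (fun n => (Polynomial.Splits.C _).mul (LeavesCLT.splits_leafPolynomial (Nat.le_add_left 3 n)))
    (LeavesCLT.tendsto_variance_leafCount.comp (Filter.tendsto_add_atTop_nat 3))
  rw [← Filter.tendsto_add_atTop_iff_nat 3]
  simp_rw [hVn, En]
  simpa using ProbabilityMeasure.tendsto_iff_forall_integral_tendsto.1 hclt.tendsto f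
end

section
/- Let G be a finite group acting on a finite nonempty set X, and let K be the Burnside kernel. Then K is a strictly positive stochastic matrix: for all x, y ∈ X one has K(x,y) > 0, and for every x ∈ X one has Σ_{y ∈ X} K(x,y) = 1. -/
/-- The Burnside kernel: `K(x,y) = (1/#G_x) · Σ_{g ∈ G_x ∩ G_y} 1/#X_g`, where `G_x`
is the stabilizer of `x` and `X_g` the fixed-point set of `g`. -/
noncomputable def burnsideK (G X : Type*) [Group G] [Fintype G] [Fintype X]
    [MulAction G X] (x y : X) : ℝ :=
  (Nat.card (MulAction.stabilizer G x) : ℝ)⁻¹ *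
    ∑ᶠ g ∈ {g : G | g • x = x ∧ g • y = y}, (Nat.card {z : X // g • z = z} : ℝ)⁻¹

/-!
One step of the Burnside kernel picks `g` uniformly in `G_x` and then `y` uniformly in `X_g`.
Since `x ∈ X_g`, the second choice is always possible, so the probabilities in a row add up to `1`.
The identity lies in every stabilizer and fixes every point, so `y` is always reached through it.
-/

open Finset

theorem sum_sum_inv_card_bipartiteAbove {α β 𝕜 : Type*} [DivisionSemiring 𝕜] [CharZero 𝕜]
    (r : α → β → Prop) {s : Finset α} {t : Finset β} [∀ a b, Decidable (r a b)]
    (h : ∀ a ∈ s, (t.bipartiteAbove r a).Nonempty) :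
    ∑ b ∈ t, ∑ a ∈ s.bipartiteBelow r b, (#(t.bipartiteAbove r a) : 𝕜)⁻¹ = #s := by
  calc ∑ b ∈ t, ∑ a ∈ s.bipartiteBelow r b, (#(t.bipartiteAbove r a) : 𝕜)⁻¹
      = ∑ a ∈ s, ∑ _b ∈ t.bipartiteAbove r a, (#(t.bipartiteAbove r a) : 𝕜)⁻¹ :=
        (sum_sum_bipartiteAbove_eq_sum_sum_bipartiteBelow r _).symm
    _ = ∑ _a ∈ s, 1 := sum_congr rfl fun a ha => by
        have card_ne_zero : (#(t.bipartiteAbove r a) : 𝕜) ≠ 0 :=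
          Nat.cast_ne_zero.mpr (h a ha).card_ne_zero
        rw [sum_const, nsmul_eq_mul, mul_inv_cancel₀ card_ne_zero]
    _ = #s := by rw [sum_const, nsmul_one]

section BurnsideKernel

variable {G X : Type*} [Group G] [Fintype G] [Fintype X] [MulAction G X]

theorem burnsideK_eq_sum_filter [DecidableEq X] (x y : X) :
    burnsideK G X x y = (#{g : G | g • x = x} : ℝ)⁻¹ *
      ∑ g ∈ ({g | g • x = x} : Finset G) with g • y = y, (#{z : X | g • z = z} : ℝ)⁻¹ := by
  have card_stabilizer : Nat.card (MulAction.stabilizer G x) = #{g : G | g • x = x} :=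
    Nat.subtype_card _ (by simp)
  have card_fixed (g : G) : Nat.card {z : X // g • z = z} = #{z : X | g • z = z} :=
    Nat.subtype_card _ (by simp)
  simp only [burnsideK, card_stabilizer, card_fixed, filter_filter]
  rw [← finsum_mem_coe_finset, coe_filter_univ]

theorem burnsideK_pos (x y : X) : 0 < burnsideK G X x y := by
  classical
  rw [burnsideK_eq_sum_filter]
  have card_stabilizer_pos : 0 < #{g : G | g • x = x} := card_pos.mpr ⟨1, by simp⟩
  have sum_inv_card_fixed_pos : 0 < ∑ g ∈ ({g | g • x = x} : Finset G) with g • y = y,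
      (#{z : X | g • z = z} : ℝ)⁻¹ := by
    refine sum_pos (fun g hg => ?_) ⟨1, by simp⟩
    have card_fixed_pos : 0 < #{z : X | g • z = z} :=
      card_pos.mpr ⟨y, by simpa using (mem_filter.mp hg).2⟩
    positivity
  positivity

theorem sum_burnsideK (x : X) : ∑ y, burnsideK G X x y = 1 := by
  classical
  have card_stabilizer_ne_zero : (#{g : G | g • x = x} : ℝ) ≠ 0 :=
    Nat.cast_ne_zero.mpr (card_ne_zero_of_mem (a := 1) (by simp))
  have sum_fixed : ∑ y, ∑ g ∈ ({g | g • x = x} : Finset G) with g • y = y,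
      (#{z : X | g • z = z} : ℝ)⁻¹ = #{g : G | g • x = x} :=
    sum_sum_inv_card_bipartiteAbove (fun (g : G) (z : X) => g • z = z)
      fun g hg => ⟨x, by simpa using hg⟩
  simp only [burnsideK_eq_sum_filter]
  rw [← mul_sum, sum_fixed, inv_mul_cancel₀ card_stabilizer_ne_zero]

end BurnsideKernel

/-- The Burnside kernel is a strictly positive stochastic matrix. -/
theorem burnsideK_pos_stochastic (G X : Type*) [Group G] [Fintype G] [Fintype X]
    [Nonempty X] [MulAction G X] :
    (∀ x y : X, 0 < burnsideK G X x y) ∧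
    (∀ x : X, ∑ y : X, burnsideK G X x y = 1) :=
  ⟨burnsideK_pos, sum_burnsideK⟩
end

section
/- Let G be a finite group acting on a finite nonempty set X, let K be the Burnside kernel, let k be the number of G-orbits on X, and define π(x) = 1/(k · #O_x) where O_x is the orbit of x. Then π is a probability distribution on X, i.e. Σ_{x ∈ X} π(x) = 1, and K is reversible with respect to π: for all x, y ∈ X, π(x)·K(x,y) = π(y)·K(y,x). In particular π is a stationary distribution: Σ_{x ∈ X} π(x)·K(x,y) = π(y) for all y ∈ X. -/
/-- `π(x) = 1/(k · #O_x)` where `k` is the number of `G`-orbits on `X` and `O_x` is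
the orbit of `x`. -/
noncomputable def burnsidePi (G X : Type*) [Group G] [Fintype G] [Fintype X]
    [MulAction G X] (x : X) : ℝ :=
  ((Nat.card (Quotient (MulAction.orbitRel G X)) : ℝ) *
    (Nat.card (MulAction.orbit G x) : ℝ))⁻¹

section TwoStepWalk

open Finset

variable {α β 𝕜 : Type*} [Fintype α] [Fintype β] [DivisionSemiring 𝕜]
  (r : α → β → Prop) [DecidableRel r]

variable (𝕜) in
/-- The transition probability from `a` to `a'` of the two-step random walk on the bipartite graph
with edge relation `r`: from `a`, move to a uniformly chosen neighbour `b` and from `b` to a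
uniformly chosen neighbour of `b`. It is `0` if `a` has no neighbour. -/
def twoStepWalk (a a' : α) : 𝕜 :=
  (#{b | r a b} : 𝕜)⁻¹ * ∑ b with r a b ∧ r a' b, (#{c | r c b} : 𝕜)⁻¹

variable [CharZero 𝕜]

lemma card_mul_twoStepWalk (a a' : α) :
    #{b | r a b} * twoStepWalk 𝕜 r a a' = ∑ b with r a b ∧ r a' b, (#{c | r c b} : 𝕜)⁻¹ := by
  by_cases ha : ∃ b, r a b
  · have hdeg : (#{b | r a b} : 𝕜) ≠ 0 := by simpa [filter_eq_empty_iff] using ha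
    rw [twoStepWalk, mul_inv_cancel_left₀ hdeg]
  · push Not at ha
    simp [ha]

lemma card_mul_twoStepWalk_comm (a a' : α) :
    #{b | r a b} * twoStepWalk 𝕜 r a a' = #{b | r a' b} * twoStepWalk 𝕜 r a' a := by
  simp only [card_mul_twoStepWalk, and_comm]

lemma sum_card_mul_twoStepWalk (a' : α) :
    ∑ a, #{b | r a b} * twoStepWalk 𝕜 r a a' = (#{b | r a' b} : 𝕜) := calc
  _ = ∑ a, ∑ b with r a b ∧ r a' b, (#{c | r c b} : 𝕜)⁻¹ := by simp only [card_mul_twoStepWalk]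
  _ = ∑ b with r a' b, ∑ a with r a b, (#{c | r c b} : 𝕜)⁻¹ := sum_comm' (by simp)
  _ = ∑ b with r a' b, (1 : 𝕜) := sum_congr rfl fun b hb => by
    have hdeg : (#{c | r c b} : 𝕜) ≠ 0 := by
      simpa [filter_eq_empty_iff] using ⟨a', (mem_filter.mp hb).2⟩
    rw [sum_const, nsmul_eq_mul, mul_inv_cancel₀ hdeg]
  _ = #{b | r a' b} := by simp

end TwoStepWalk

section MulAction

open Finset MulAction

variable (G : Type*) {X : Type*} [Group G] [MulAction G X]

lemma card_stabilizer_eq_card_filter [Fintype G] [DecidableEq X] (x : X) :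
    Nat.card (stabilizer G x) = #{g : G | g • x = x} :=
  Nat.subtype_card _ (by simp)

lemma card_orbit_mul_card_stabilizer (x : X) :
    Nat.card (orbit G x) * Nat.card (stabilizer G x) = Nat.card G := by
  rw [← Nat.card_prod, Nat.card_congr (orbitProdStabilizerEquivGroup G x)]

variable [Fintype X]

variable {G} in
lemma card_fixedBy_eq_card_filter [DecidableEq X] (g : G) :
    Nat.card (fixedBy X g) = #{x : X | g • x = x} :=
  Nat.subtype_card _ (by simp)

variable (X) in
lemma sum_card_stabilizer [Finite G] :
    ∑ x : X, Nat.card (stabilizer G x) = Nat.card (Quotient (orbitRel G X)) * Nat.card G := by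
  have := Fintype.ofFinite G
  have := Classical.decEq X
  calc
    _ = ∑ x : X, #{g : G | g • x = x} := by simp only [card_stabilizer_eq_card_filter]
    _ = ∑ g : G, #{x : X | g • x = x} := sum_card_bipartiteAbove_eq_sum_card_bipartiteBelow _
    _ = ∑ g : G, Nat.card (fixedBy X g) := by simp only [card_fixedBy_eq_card_filter]
    _ = _ := by
      rw [← Nat.card_sigma, Nat.card_congr (sigmaFixedByEquivOrbitsProdGroup G X), Nat.card_prod]

variable [Fintype G]

lemma burnsidePi_eq_mul_card_stabilizer (x : X) :
    burnsidePi G X x = (Nat.card (Quotient (orbitRel G X)) * Nat.card G : ℝ)⁻¹ *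
      Nat.card (stabilizer G x) := by
  have hstab : (Nat.card (stabilizer G x) : ℝ) ≠ 0 := by exact_mod_cast Nat.card_pos.ne'
  rw [burnsidePi, ← card_orbit_mul_card_stabilizer G x, Nat.cast_mul]
  field_simp

variable (X) in
lemma sum_burnsidePi [Nonempty X] : ∑ x : X, burnsidePi G X x = 1 := by
  have horbits : Nonempty (Quotient (orbitRel G X)) := Nonempty.map (Quotient.mk _) ‹_›
  have hmass : (Nat.card (Quotient (orbitRel G X)) * Nat.card G : ℝ) ≠ 0 := by
    exact_mod_cast (Nat.mul_pos Nat.card_pos Nat.card_pos).ne'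
  simp only [burnsidePi_eq_mul_card_stabilizer, ← mul_sum]
  rw [← Nat.cast_sum, sum_card_stabilizer, Nat.cast_mul, inv_mul_cancel₀ hmass]

variable [DecidableEq X]

lemma burnsideK_eq_twoStepWalk (x y : X) :
    burnsideK G X x y = twoStepWalk ℝ (fun (z : X) (g : G) => g • z = z) x y := by
  have hfixed (g : G) : Nat.card {z : X // g • z = z} = #{z : X | g • z = z} :=
    card_fixedBy_eq_card_filter g
  simp only [burnsideK, twoStepWalk, card_stabilizer_eq_card_filter, hfixed]
  congr 1
  exact finsum_cond_eq_sum_of_cond_iff _ (by simp)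

lemma burnsidePi_mul_burnsideK (x y : X) :
    burnsidePi G X x * burnsideK G X x y =
      (Nat.card (Quotient (orbitRel G X)) * Nat.card G : ℝ)⁻¹ *
        (#{g : G | g • x = x} * twoStepWalk ℝ (fun (z : X) (g : G) => g • z = z) x y) := by
  rw [burnsidePi_eq_mul_card_stabilizer, burnsideK_eq_twoStepWalk, card_stabilizer_eq_card_filter,
    mul_assoc]

end MulAction

/-- `π` is a probability distribution, the Burnside kernel is reversible with respect
to `π`, and in particular `π` is stationary for it. -/
theorem burnsideK_reversible (G X : Type*) [Group G] [Fintype G] [Fintype X]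
    [Nonempty X] [MulAction G X] :
    (∑ x : X, burnsidePi G X x = 1) ∧
    (∀ x y : X, burnsidePi G X x * burnsideK G X x y =
      burnsidePi G X y * burnsideK G X y x) ∧
    (∀ y : X, ∑ x : X, burnsidePi G X x * burnsideK G X x y = burnsidePi G X y) := by
  have := Classical.decEq X
  refine ⟨sum_burnsidePi G X, fun x y => ?reversible, fun y => ?stationary⟩
  case reversible =>
    rw [burnsidePi_mul_burnsideK, burnsidePi_mul_burnsideK,
      card_mul_twoStepWalk_comm fun z g => g • z = z]
  case stationary =>
    simp only [burnsidePi_mul_burnsideK, ← Finset.mul_sum]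
    rw [sum_card_mul_twoStepWalk fun z g => g • z = z,
      burnsidePi_eq_mul_card_stabilizer, card_stabilizer_eq_card_filter]
end

section
/- Let G be a finite group acting on a finite nonempty set X, and let K be the Burnside kernel. Then the Burnside process projects to a well-defined symmetric Markov chain on orbits: (1) for any x, x' in the same G-orbit and any G-orbit O', Σ_{y ∈ O'} K(x,y) = Σ_{y ∈ O'} K(x',y); and (2) writing K̄(O,O') for this common value when x ranges over the orbit O, one has K̄(O,O') = K̄(O',O) for all G-orbits O, O'. -/
open MulAction

section

variable {G X M : Type*} [Group G] [MulAction G X] [AddCommMonoid M]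

theorem finsum_mem_orbit_smul_left {K : X → X → M}
    (hK : ∀ (g : G) (x y : X), K (g • x) (g • y) = K x y) (g : G) (x z : X) :
    ∑ᶠ y ∈ orbit G z, K (g • x) y = ∑ᶠ y ∈ orbit G z, K x y := by
  rw [← finsum_comp_equiv (toPerm g)]
  simp only [toPerm_apply, hK, ← orbit_eq_iff (b := z), orbit_smul]

theorem card_smul_eq_of_mem_orbit {y z : X} (hy : y ∈ orbit G z) :
    Nat.card {g : G // g • z = y} = Nat.card (stabilizer G z) := by
  obtain ⟨k, rfl⟩ := hy
  refine (Nat.card_congr ((Equiv.mulLeft k).subtypeEquiv fun g => ?_)).symm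
  simp only [mem_stabilizer_iff, Equiv.coe_mulLeft, mul_smul, smul_left_cancel_iff]

theorem sum_smul_eq_card_stabilizer_nsmul_finsum_mem_orbit [Fintype G] (f : X → M) (z : X) :
    ∑ g : G, f (g • z) = Nat.card (stabilizer G z) • ∑ᶠ y ∈ orbit G z, f y := by
  classical
  have : Fintype (orbit G z) := Set.fintypeRange _
  let toOrbit (g : G) : orbit G z := ⟨g • z, mem_orbit z g⟩
  have card_fiber (y : orbit G z) :
      Fintype.card {g : G // toOrbit g = y} = Nat.card (stabilizer G z) := by
    simp only [toOrbit, Subtype.ext_iff, ← card_smul_eq_of_mem_orbit y.2, Nat.card_eq_fintype_card]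
  calc
    ∑ g : G, f (g • z) = ∑ y : orbit G z, ∑ _g : {g : G // toOrbit g = y}, f y :=
      (Fintype.sum_fiberwise' toOrbit fun y => f y).symm
    _ = Nat.card (stabilizer G z) • ∑ y : orbit G z, f y := by
      simp only [Finset.sum_const, Finset.card_univ, card_fiber, Finset.smul_sum]
    _ = Nat.card (stabilizer G z) • ∑ᶠ y ∈ orbit G z, f y := by
      rw [← finsum_set_coe_eq_finsum_mem, finsum_eq_sum_of_fintype]

theorem card_stabilizer_nsmul_finsum_mem_orbit_comm [Finite G] {W : X → X → M}
    (hW : ∀ (g : G) (x y : X), W (g • x) (g • y) = W x y) (x z : X) :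
    Nat.card (stabilizer G z) • ∑ᶠ y ∈ orbit G z, W x y =
      Nat.card (stabilizer G x) • ∑ᶠ y ∈ orbit G x, W y z := by
  have := Fintype.ofFinite G
  calc
    Nat.card (stabilizer G z) • ∑ᶠ y ∈ orbit G z, W x y = ∑ g : G, W x (g • z) :=
      (sum_smul_eq_card_stabilizer_nsmul_finsum_mem_orbit _ z).symm
    _ = ∑ g : G, W x (g⁻¹ • z) := (Equiv.sum_comp (Equiv.inv G) fun g => W x (g • z)).symm
    _ = ∑ g : G, W (g • x) z := by
      refine Fintype.sum_congr _ _ fun g => ?_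
      rw [← hW g x, smul_inv_smul]
    _ = Nat.card (stabilizer G x) • ∑ᶠ y ∈ orbit G x, W y z :=
      sum_smul_eq_card_stabilizer_nsmul_finsum_mem_orbit (fun y => W y z) x

/-- The sum of the weights `w g` over the common stabilizer `G_x ∩ G_y`. The weight `1/#X_g` gives
the unnormalized Burnside kernel. -/
noncomputable def commonStabilizerSum (w : G → M) (x y : X) : M :=
  ∑ᶠ g ∈ {g : G | g • x = x ∧ g • y = y}, w g

theorem commonStabilizerSum_comm (w : G → M) (x y : X) :
    commonStabilizerSum w x y = commonStabilizerSum w y x := by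
  simp only [commonStabilizerSum, and_comm]

theorem commonStabilizerSum_smul_smul {w : G → M} (hw : ∀ h g : G, w (h * g * h⁻¹) = w g)
    (h : G) (x y : X) :
    commonStabilizerSum w (h • x) (h • y) = commonStabilizerSum w x y := by
  rw [commonStabilizerSum, ← finsum_comp_equiv (MulAut.conj h).toEquiv]
  simp [commonStabilizerSum, mul_smul, hw]

open scoped Pointwise in
theorem card_fixedBy_conj (h g : G) :
    Nat.card (fixedBy X (h * g * h⁻¹)) = Nat.card (fixedBy X g) := by
  rw [← smul_fixedBy, Set.natCard_smul_set]

theorem card_stabilizer_smul (g : G) (x : X) :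
    Nat.card (stabilizer G (g • x)) = Nat.card (stabilizer G x) :=
  (Nat.card_congr (stabilizerEquivStabilizer rfl).toEquiv).symm

end

section

variable {G X : Type*} [Group G] [MulAction G X]

variable (G X) in
/-- The unnormalized Burnside kernel `W(x,y) = #G_x · K(x,y)`. -/
noncomputable def burnsideW (x y : X) : ℝ :=
  commonStabilizerSum (fun g : G => (Nat.card (fixedBy X g) : ℝ)⁻¹) x y

theorem burnsideW_comm (x y : X) : burnsideW G X x y = burnsideW G X y x :=
  commonStabilizerSum_comm _ x y

theorem burnsideW_smul_smul (g : G) (x y : X) :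
    burnsideW G X (g • x) (g • y) = burnsideW G X x y :=
  commonStabilizerSum_smul_smul (fun h g => by rw [card_fixedBy_conj]) g x y

variable [Fintype G] [Fintype X]

theorem burnsideK_eq_inv_mul (x y : X) :
    burnsideK G X x y = (Nat.card (stabilizer G x) : ℝ)⁻¹ * burnsideW G X x y :=
  rfl

theorem burnsideK_smul_smul (g : G) (x y : X) :
    burnsideK G X (g • x) (g • y) = burnsideK G X x y := by
  rw [burnsideK_eq_inv_mul, burnsideK_eq_inv_mul, burnsideW_smul_smul, card_stabilizer_smul]

theorem finsum_mem_orbit_burnsideK_eq_div (x z : X) :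
    ∑ᶠ y ∈ orbit G z, burnsideK G X x y =
      (∑ᶠ y ∈ orbit G z, burnsideW G X x y) / Nat.card (stabilizer G x) := by
  simp only [burnsideK_eq_inv_mul, div_eq_inv_mul, mul_finsum_mem]

end

/-- The Burnside process projects to a well-defined symmetric Markov chain on orbits:
(1) for `x, x'` in the same orbit, the total kernel mass from `x` and from `x'` into
any orbit `O' = orbit G z` coincide; (2) the induced kernel on orbits is symmetric:
the common mass from the orbit of `x` into the orbit of `z` equals the mass from the
orbit of `z` into the orbit of `x`. -/
theorem burnside_orbit_chain (G X : Type*) [Group G] [Fintype G] [Fintype X]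
    [Nonempty X] [MulAction G X] :
    (∀ x x' : X, (∃ g : G, g • x = x') → ∀ z : X,
      (∑ᶠ y ∈ MulAction.orbit G z, burnsideK G X x y) =
        ∑ᶠ y ∈ MulAction.orbit G z, burnsideK G X x' y) ∧
    (∀ x z : X,
      (∑ᶠ y ∈ MulAction.orbit G z, burnsideK G X x y) =
        ∑ᶠ y ∈ MulAction.orbit G x, burnsideK G X z y) := by
  refine ⟨?_, fun x z => ?_⟩
  · rintro x _ ⟨g, rfl⟩ z
    exact (finsum_mem_orbit_smul_left burnsideK_smul_smul g x z).symm
  · have card_ne_zero (y : X) : (Nat.card (stabilizer G y) : ℝ) ≠ 0 :=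
      Nat.cast_ne_zero.mpr Nat.card_pos.ne'
    have double_count := card_stabilizer_nsmul_finsum_mem_orbit_comm
      (burnsideW_smul_smul (G := G)) x z
    simp only [burnsideW_comm _ z, nsmul_eq_mul] at double_count
    rw [finsum_mem_orbit_burnsideK_eq_div, finsum_mem_orbit_burnsideK_eq_div,
      div_eq_div_iff (card_ne_zero x) (card_ne_zero z), mul_comm, double_count, mul_comm]
end

section
/- Let σ be a permutation of [n], and for d ≥ 1 let λ_d be the number of cycles of σ of length d (fixed points counting as 1-cycles). Then the number of functions f : [n] → [n] (not necessarily bijective) satisfying f ∘ σ = σ ∘ f equals ∏_{d=1}^{n} (Σ_{e | d} e·λ_e)^{λ_d}. -/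
/-- The number of cycles of length `d` of a permutation of `Fin n`
(fixed points count as cycles of length 1). -/
noncomputable def cycleCount {n : ℕ} (σ : Equiv.Perm (Fin n)) (d : ℕ) : ℕ :=
  (Finset.univ.filter fun i : Fin n => Function.minimalPeriod (⇑σ) i = d).card / d

/-!
A map `f` with `f ∘ σ = τ ∘ f` is determined by its values on one representative `r` of each cycle
of `σ`, since `f (σ^k r) = τ^k (f r)`. If the cycle of `r` has length `d`, then `f r` may be any `y`
with `τ^d y = y`, and all such choices extend to a map `f`. The points `y` with `τ^d y = y` are
those on the cycles of `τ` whose length divides `d`.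
-/

namespace CommutingMaps

open Function

variable {α β : Type*}

section Cycles

variable {f : α → α} {x : α}

/-- The cycles of a self-map `f`, each recorded as the cyclic list of the iterates of one of its
points. Fixed points form cycles of length 1; points that are not periodic lie on no cycle. -/
def cycles (f : α → α) : Set (Cycle α) := periodicOrbit f '' periodicPts f

/-- The number `λ_d` of cycles of length `d` of a self-map. It is 0 when there are infinitely many
such cycles. -/
noncomputable def numCycles (f : α → α) (d : ℕ) : ℕ :=
  Nat.card {c : cycles f // c.1.length = d}

/-- A chosen point on a cycle of a self-map. -/
noncomputable def cycleRep (c : cycles f) : α := c.2.choose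

lemma cycleRep_mem_periodicPts (c : cycles f) : cycleRep c ∈ periodicPts f :=
  c.2.choose_spec.1

lemma periodicOrbit_cycleRep (c : cycles f) : periodicOrbit f (cycleRep c) = c.1 :=
  c.2.choose_spec.2

lemma minimalPeriod_cycleRep (c : cycles f) : minimalPeriod f (cycleRep c) = c.1.length := by
  rw [← periodicOrbit_cycleRep c, periodicOrbit_length]

lemma length_cycle_pos (c : cycles f) : 0 < c.1.length :=
  minimalPeriod_cycleRep c ▸ minimalPeriod_pos_of_mem_periodicPts (cycleRep_mem_periodicPts c)

lemma length_cycle_le_card [Finite α] (c : cycles f) : c.1.length ≤ Nat.card α := by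
  have := Fintype.ofFinite α
  rw [← minimalPeriod_cycleRep c, Nat.card_eq_fintype_card]
  exact minimalPeriod_le_card

lemma exists_iterate_cycleRep_eq (hx : x ∈ periodicPts f) :
    ∃ (c : cycles f) (k : ℕ), f^[k] (cycleRep c) = x := by
  refine ⟨⟨periodicOrbit f x, x, hx, rfl⟩, ?_⟩
  rw [← mem_periodicOrbit_iff (cycleRep_mem_periodicPts _), periodicOrbit_cycleRep]
  exact self_mem_periodicOrbit hx

lemma eq_of_iterate_cycleRep_eq {c c' : cycles f} {a b : ℕ}
    (h : f^[a] (cycleRep c) = f^[b] (cycleRep c')) : c = c' := by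
  rw [Subtype.ext_iff, ← periodicOrbit_cycleRep c, ← periodicOrbit_cycleRep c',
    ← periodicOrbit_apply_iterate_eq (cycleRep_mem_periodicPts c) a, h,
    periodicOrbit_apply_iterate_eq (cycleRep_mem_periodicPts c')]

lemma minimalPeriod_iterate_cycleRep (c : cycles f) (k : ℕ) :
    minimalPeriod f (f^[k] (cycleRep c)) = c.1.length := by
  rw [minimalPeriod_apply_iterate (cycleRep_mem_periodicPts c), minimalPeriod_cycleRep]

lemma bijective_iterate_cycleRep (f : α → α) {d : ℕ} (hd : 0 < d) :
    Bijective fun p : {c : cycles f // c.1.length = d} × Fin d =>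
      (⟨f^[p.2] (cycleRep p.1.1), (minimalPeriod_iterate_cycleRep p.1.1 p.2).trans p.1.2⟩ :
        {x // minimalPeriod f x = d}) := by
  constructor
  · rintro ⟨⟨c, rfl⟩, j⟩ ⟨⟨c', hc'⟩, k⟩ h
    have h_iterate : f^[j] (cycleRep c) = f^[k] (cycleRep c') := congrArg Subtype.val h
    obtain rfl := eq_of_iterate_cycleRep_eq h_iterate
    rw [iterate_eq_iterate_iff_of_lt_minimalPeriod (by simp [minimalPeriod_cycleRep])
      (by simp [minimalPeriod_cycleRep])] at h_iterate
    exact Prod.ext rfl (Fin.ext h_iterate)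
  · rintro ⟨x, rfl⟩
    obtain ⟨c, k, rfl⟩ := exists_iterate_cycleRep_eq (minimalPeriod_pos_iff_mem_periodicPts.1 hd)
    refine ⟨⟨⟨c, (minimalPeriod_iterate_cycleRep c k).symm⟩, ⟨_, Nat.mod_lt k hd⟩⟩,
      Subtype.ext ?_⟩
    change f^[k % _] (cycleRep c) = f^[k] (cycleRep c)
    rw [minimalPeriod_iterate_cycleRep, ← minimalPeriod_cycleRep, iterate_mod_minimalPeriod_eq]

lemma card_minimalPeriod_eq (f : α → α) {d : ℕ} (hd : 0 < d) :
    Nat.card {x // minimalPeriod f x = d} = d * numCycles f d := by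
  rw [← Nat.card_eq_of_bijective _ (bijective_iterate_cycleRep f hd), Nat.card_prod, Nat.card_fin,
    numCycles, mul_comm]

lemma card_ptsOfPeriod {d : ℕ} (hd : 0 < d) (hf : (ptsOfPeriod f d).Finite) :
    Nat.card (ptsOfPeriod f d) = ∑ e ∈ d.divisors, e * numCycles f e := by
  classical
  have h_maps : ∀ x ∈ hf.toFinset, minimalPeriod f x ∈ d.divisors := fun x hx =>
    Nat.mem_divisors.2 ⟨(hf.mem_toFinset.1 hx).minimalPeriod_dvd, hd.ne'⟩
  rw [Nat.card_eq_card_finite_toFinset hf, Finset.card_eq_sum_card_fiberwise h_maps]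
  refine Finset.sum_congr rfl fun e he => ?_
  rw [← card_minimalPeriod_eq f (Nat.pos_of_mem_divisors he)]
  refine (Nat.subtype_card _ fun x => ?_).symm
  rw [Finset.mem_filter, hf.mem_toFinset, and_iff_right_iff_imp]
  rintro rfl
  exact isPeriodicPt_iff_minimalPeriod_dvd.2 (Nat.dvd_of_mem_divisors he)

lemma numCycles_zero (f : α → α) : numCycles f 0 = 0 := by
  have : IsEmpty {c : cycles f // c.1.length = 0} :=
    ⟨fun c => (length_cycle_pos c.1).ne' c.2⟩
  exact Nat.card_of_isEmpty

lemma cycleCount_eq_numCycles {n : ℕ} (σ : Equiv.Perm (Fin n)) (d : ℕ) :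
    cycleCount σ d = numCycles σ d := by
  obtain rfl | hd := d.eq_zero_or_pos
  · rw [cycleCount, Nat.div_zero, numCycles_zero]
  · rw [cycleCount, ← Fintype.card_subtype, ← Nat.card_eq_fintype_card, card_minimalPeriod_eq _ hd,
      Nat.mul_div_cancel_left _ hd]

end Cycles

section Semiconj

variable {σ : α → α} {τ : β → β}

lemma iterate_eq_of_iterate_eq {r : α} {y : β} {a b : ℕ} (hr : r ∈ periodicPts σ)
    (hy : IsPeriodicPt τ (minimalPeriod σ r) y) (h : σ^[a] r = σ^[b] r) : τ^[a] y = τ^[b] y := by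
  have h_pos := minimalPeriod_pos_of_mem_periodicPts hr
  have h_mod : a % minimalPeriod σ r = b % minimalPeriod σ r := by
    rwa [← iterate_eq_iterate_iff_of_lt_minimalPeriod (Nat.mod_lt _ h_pos) (Nat.mod_lt _ h_pos),
      iterate_mod_minimalPeriod_eq, iterate_mod_minimalPeriod_eq]
  rw [← hy.iterate_mod_apply a, h_mod, hy.iterate_mod_apply]

lemma semiconj_ext_cycleRep (hσ : ∀ x, x ∈ periodicPts σ) {f g : α → β} (hf : Semiconj f σ τ)
    (hg : Semiconj g σ τ) (h : ∀ c : cycles σ, f (cycleRep c) = g (cycleRep c)) : f = g := by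
  funext x
  obtain ⟨c, k, rfl⟩ := exists_iterate_cycleRep_eq (hσ x)
  rw [(hf.iterate_right k).eq, (hg.iterate_right k).eq, h]

lemma exists_semiconj_cycleRep (hσ : ∀ x, x ∈ periodicPts σ) {y : cycles σ → β}
    (hy : ∀ c, IsPeriodicPt τ c.1.length (y c)) :
    ∃ f : α → β, Semiconj f σ τ ∧ ∀ c, f (cycleRep c) = y c := by
  choose c k h_rep using fun x => exists_iterate_cycleRep_eq (hσ x)
  let f (x : α) : β := τ^[k x] (y (c x))
  have hf (c' : cycles σ) (m : ℕ) : f (σ^[m] (cycleRep c')) = τ^[m] (y c') := by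
    have h := h_rep (σ^[m] (cycleRep c'))
    have h_cycle : c (σ^[m] (cycleRep c')) = c' := eq_of_iterate_cycleRep_eq h
    simp only [f]
    rw [h_cycle] at h ⊢
    exact iterate_eq_of_iterate_eq (cycleRep_mem_periodicPts c')
      (minimalPeriod_cycleRep c' ▸ hy c') h
  refine ⟨f, fun x => ?_, fun c' => hf c' 0⟩
  calc f (σ x) = f (σ^[k x + 1] (cycleRep (c x))) := by rw [iterate_succ_apply', h_rep]
    _ = τ (f x) := by rw [hf, iterate_succ_apply']

/-- A map semiconjugating `σ` to `τ` amounts to a choice, for each cycle of `σ` of length `d`, of a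
point fixed by `τ^d`: the image of the representative of the cycle. -/
noncomputable def semiconjEquiv (hσ : ∀ x, x ∈ periodicPts σ) :
    {f : α → β // Semiconj f σ τ} ≃ ((c : cycles σ) → ptsOfPeriod τ c.1.length) :=
  Equiv.ofBijective
    (fun f c => ⟨f.1 (cycleRep c),
      (minimalPeriod_cycleRep c ▸ isPeriodicPt_minimalPeriod σ (cycleRep c)).map f.2⟩)
    ⟨fun f g h => Subtype.ext <| semiconj_ext_cycleRep hσ f.2 g.2 fun c =>
      congrArg Subtype.val (congrFun h c),
    fun y => by
      obtain ⟨f, hf, hfy⟩ := exists_semiconj_cycleRep hσ fun c => (y c).2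
      exact ⟨⟨f, hf⟩, funext fun c => Subtype.ext (hfy c)⟩⟩

end Semiconj

lemma prod_cycles_length [Finite α] {M : Type*} [CommMonoid M] (σ : α → α) [Fintype (cycles σ)]
    (F : ℕ → M) :
    ∏ c : cycles σ, F c.1.length = ∏ d ∈ Finset.Icc 1 (Nat.card α), F d ^ numCycles σ d := by
  rw [← Finset.prod_fiberwise_of_maps_to' (t := Finset.Icc 1 (Nat.card α))
    (g := fun c : cycles σ => c.1.length) fun c _ => Finset.mem_Icc.2
      ⟨length_cycle_pos c, length_cycle_le_card c⟩]
  refine Finset.prod_congr rfl fun d _ => ?_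
  rw [Finset.prod_const, numCycles, Nat.card_eq_fintype_card, Fintype.card_subtype]

end CommutingMaps

open CommutingMaps Function in
theorem commuting_maps_count_general {α β : Type*} [Finite α] {σ : α → α} (hσ : Injective σ)
    {τ : β → β} (hτ : ∀ d, 0 < d → (ptsOfPeriod τ d).Finite) :
    Nat.card {f : α → β // Semiconj f σ τ} =
      ∏ d ∈ Finset.Icc 1 (Nat.card α),
        (∑ e ∈ d.divisors, e * numCycles τ e) ^ numCycles σ d := by
  have : Finite (cycles σ) := ((Set.toFinite (periodicPts σ)).image _).to_subtype
  have := Fintype.ofFinite (cycles σ)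
  rw [Nat.card_congr (semiconjEquiv hσ.mem_periodicPts), Nat.card_pi, ← prod_cycles_length]
  refine Finset.prod_congr rfl fun c _ => ?_
  have h_pos := length_cycle_pos c
  exact card_ptsOfPeriod h_pos (hτ _ h_pos)

open CommutingMaps Function in
/-- The number of self-maps of `[n]` commuting with a permutation `σ` equals
`∏_{d=1}^{n} (Σ_{e ∣ d} e·λ_e)^{λ_d}`. -/
theorem commuting_maps_count (n : ℕ) (σ : Equiv.Perm (Fin n)) :
    Nat.card {f : Fin n → Fin n // f ∘ ⇑σ = ⇑σ ∘ f} =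
      ∏ d ∈ Finset.Icc 1 n,
        (∑ e ∈ d.divisors, e * cycleCount σ e) ^ cycleCount σ d := by
  simpa only [semiconj_iff_comp_eq, cycleCount_eq_numCycles, Nat.card_fin] using
    commuting_maps_count_general σ.injective fun _ _ => Set.toFinite (ptsOfPeriod σ _)
end
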